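/- arXiv:1703.02444 — 2 statements merged into one kernel-verified Lean document; each statement's English description precedes it below -/
import Mathlib

section
/- The (2m+1)-th root of the (2m+1)-dimensional Lebesgue volume of Q(P_m) tends to sqrt(2)/pi as m tends to infinity; equivalently, (A_{2m+1}/(2^m * (2m+1)!))^(1/(2m+1)) tends to sqrt(2)/pi as m tends to infinity, where A_{2m+1} is the Euler number counting alternating permutations of {1, ..., 2m+1}. -/
open MeasureTheory Filter

noncomputable section

/-- The standard relaxation `Q(G)` of the boolean quadric polytope of a graph `G`:
the set of points of `[0,1]^(V + E)` satisfying, for each edge `(i,j)`,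
`0 ≤ y_{ij}`, `y_{ij} ≤ x_i`, `y_{ij} ≤ x_j` and `x_i + x_j ≤ 1 + y_{ij}`. -/
def QSet {V : Type*} (G : SimpleGraph V) : Set ((V → ℝ) × (↥G.edgeSet → ℝ)) :=
  {p | (∀ i, p.1 i ∈ Set.Icc (0 : ℝ) 1) ∧ (∀ e, p.2 e ∈ Set.Icc (0 : ℝ) 1) ∧
    ∀ (i j : V) (h : G.Adj i j),
      0 ≤ p.2 ⟨s(i, j), (SimpleGraph.mem_edgeSet _).mpr h⟩ ∧
      p.2 ⟨s(i, j), (SimpleGraph.mem_edgeSet _).mpr h⟩ ≤ p.1 i ∧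
      p.2 ⟨s(i, j), (SimpleGraph.mem_edgeSet _).mpr h⟩ ≤ p.1 j ∧
      p.1 i + p.1 j ≤ 1 + p.2 ⟨s(i, j), (SimpleGraph.mem_edgeSet _).mpr h⟩}

/-- The Euler number `A k`: the number of alternating permutations `σ` of
`{1, …, k}`, i.e. with `σ 1 > σ 2 < σ 3 > σ 4 < ⋯` (here written 0-indexed). -/
def eulerNumber (k : ℕ) : ℕ :=
  Nat.card {σ : Equiv.Perm (Fin k) //
    ∀ (i : ℕ) (h : i + 1 < k),
      (Even i → σ ⟨i + 1, h⟩ < σ ⟨i, Nat.lt_of_succ_lt h⟩) ∧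
      (Odd i → σ ⟨i, Nat.lt_of_succ_lt h⟩ < σ ⟨i + 1, h⟩)}

/-- The path `P_m` with `m + 1` vertices and `m` edges. -/
def pathG (m : ℕ) : SimpleGraph (Fin (m + 1)) :=
  SimpleGraph.fromRel (fun i j => (i : ℕ) + 1 = (j : ℕ))

instance (m : ℕ) : DecidableRel (pathG m).Adj := fun i j =>
  decidable_of_iff _ (SimpleGraph.fromRel_adj _ i j).symm

/-!
Once the vertex variables of `Q(P_m)` are fixed, the edge variables range over a product of
intervals. In the folded coordinates `|2 x - 1|`, which are again uniform on `[0, 1]`, the length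
of the interval of an edge is half the composition of the kernel `1[x + y < 1]` with itself. So the
volume is `2⁻ᵐ ∫ T²ᵐ 1`, where `T` is the integral operator with kernel `1[x + y < 1]`. Reflecting
every other coordinate identifies `∫ Tⁿ 1` with the probability that `n + 1` independent uniform
points alternate, which is `A_{n+1} / (n+1)!`. Finally `∫ f = T f 0`, and `cos (π x / 2)` is an
eigenfunction of `T` with eigenvalue `2 / π` and satisfies `T 1 ≤ cos (π x / 2) ≤ 1`, so
`(2 / π)ⁿ⁺¹ ≤ A_{n+1} / (n+1)! ≤ (2 / π)ⁿ`.
-/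

open scoped ENNReal

section KernelOperator

variable {α : Type*} [MeasurableSpace α] (μ : Measure α) {K L : α → α → ℝ≥0∞}
  {f φ : α → ℝ≥0∞} {r : ℝ≥0∞}

/-- The integral operator with kernel `K`, acting on densities: `f` is integrated against the
first variable of `K`. -/
def kernelOperator (K : α → α → ℝ≥0∞) (f : α → ℝ≥0∞) (y : α) : ℝ≥0∞ :=
  ∫⁻ x, f x * K x y ∂μ

/-- The composition of the kernels `K` and `L`, that is, their continuous matrix product. -/
def kernelComp (K L : α → α → ℝ≥0∞) (x y : α) : ℝ≥0∞ :=
  ∫⁻ z, K x z * L z y ∂μ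

lemma kernelOperator_mono (K : α → α → ℝ≥0∞) : Monotone (kernelOperator μ K) :=
  fun _ _ hfg y => lintegral_mono fun x => mul_le_mul_left (hfg x) (K x y)

lemma kernelOperator_const_smul (hr : r ≠ ∞) (K : α → α → ℝ≥0∞) (f : α → ℝ≥0∞) :
    kernelOperator μ K (r • f) = r • kernelOperator μ K f := by
  ext y
  simp only [kernelOperator, Pi.smul_apply, smul_eq_mul, mul_assoc]
  exact lintegral_const_mul' r _ hr

lemma kernelOperator_iterate_eigen (hr : r ≠ ∞) (h : kernelOperator μ K φ = r • φ) (n : ℕ) :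
    (kernelOperator μ K)^[n] φ = r ^ n • φ := by
  induction n with
  | zero => simp
  | succ n ih =>
    rw [Function.iterate_succ_apply', ih,
      kernelOperator_const_smul μ (ENNReal.pow_ne_top hr), h, smul_smul, pow_succ]

lemma measurable_mul_prod_path (hK : Measurable (Function.uncurry K)) (hf : Measurable f) (n : ℕ) :
    Measurable fun u : Fin (n + 1) → α =>
      f (u 0) * ∏ i : Fin n, K (u i.castSucc) (u i.succ) :=
  (hf.comp (measurable_pi_apply 0)).mul <| Finset.measurable_fun_prod _ fun i _ =>
    hK.comp (f := fun u : Fin (n + 1) → α => (u i.castSucc, u i.succ)) (by fun_prop)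

section SFinite

variable [SFinite μ]

lemma measurable_kernelOperator (hK : Measurable (Function.uncurry K)) (hf : Measurable f) :
    Measurable (kernelOperator μ K f) :=
  ((hf.comp measurable_fst).mul hK).lintegral_prod_left'

lemma measurable_kernelComp (hK : Measurable (Function.uncurry K))
    (hL : Measurable (Function.uncurry L)) :
    Measurable (Function.uncurry (kernelComp μ K L)) := by
  refine Measurable.lintegral_prod_right'
    (f := fun p : (α × α) × α => K p.1.1 p.2 * L p.2 p.1.2) ?_
  exact (hK.comp (f := fun p : (α × α) × α => (p.1.1, p.2)) (by fun_prop)).mul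
    (hL.comp (f := fun p : (α × α) × α => (p.2, p.1.2)) (by fun_prop))

lemma kernelOperator_kernelOperator (hK : Measurable (Function.uncurry K))
    (hL : Measurable (Function.uncurry L)) (hf : Measurable f) :
    kernelOperator μ L (kernelOperator μ K f) = kernelOperator μ (kernelComp μ K L) f := by
  have hLy : ∀ y, Measurable fun z => L z y := fun y => hL.comp measurable_prodMk_right
  have hKx : ∀ x, Measurable (K x) := fun x => hK.comp measurable_prodMk_left
  ext y
  calc ∫⁻ z, (∫⁻ x, f x * K x z ∂μ) * L z y ∂μ
      = ∫⁻ z, ∫⁻ x, f x * K x z * L z y ∂μ ∂μ := by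
        refine lintegral_congr fun z => (lintegral_mul_const _ ?_).symm
        exact hf.mul (hK.comp measurable_prodMk_right)
    _ = ∫⁻ x, ∫⁻ z, f x * K x z * L z y ∂μ ∂μ := by
        refine lintegral_lintegral_swap (Measurable.aemeasurable ?_)
        exact ((hf.comp measurable_snd).mul (hK.comp measurable_swap)).mul
          ((hLy y).comp measurable_fst)
    _ = ∫⁻ x, f x * ∫⁻ z, K x z * L z y ∂μ ∂μ := by
        simp only [mul_assoc]
        exact lintegral_congr fun x => lintegral_const_mul _ ((hKx x).mul (hLy y))

lemma kernelOperator_iterate_two_mul (hK : Measurable (Function.uncurry K)) (hf : Measurable f)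
    (n : ℕ) :
    (kernelOperator μ K)^[2 * n] f = (kernelOperator μ (kernelComp μ K K))^[n] f := by
  induction n generalizing f with
  | zero => rfl
  | succ n ih =>
    rw [Nat.mul_succ, Function.iterate_succ_apply, Function.iterate_succ_apply,
      Function.iterate_succ_apply, ← kernelOperator_kernelOperator μ hK hK hf]
    exact ih (measurable_kernelOperator μ hK (measurable_kernelOperator μ hK hf))

end SFinite

lemma lintegral_mul_prod_path [SigmaFinite μ] (hK : Measurable (Function.uncurry K))
    (hf : Measurable f) (n : ℕ) :
    ∫⁻ u : Fin (n + 1) → α, f (u 0) * ∏ i : Fin n, K (u i.castSucc) (u i.succ)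
        ∂Measure.pi (fun _ => μ) =
      ∫⁻ x, (kernelOperator μ K)^[n] f x ∂μ := by
  induction n generalizing f with
  | zero =>
    simp only [Finset.univ_eq_empty, Finset.prod_empty, mul_one, Function.iterate_zero, id_eq]
    convert (measurePreserving_funUnique μ (Fin 1)).lintegral_comp hf
    rfl
  | succ n ih =>
    have hsplit := (measurePreserving_piFinSuccAbove (fun _ : Fin (n + 2) => μ) 0).symm
    have hmeas := measurable_mul_prod_path hK hf (n + 1)
    rw [Function.iterate_succ_apply, ← ih (measurable_kernelOperator μ hK hf),
      ← hsplit.lintegral_comp hmeas]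
    refine (lintegral_prod_symm' _ (hmeas.comp hsplit.measurable)).trans ?_
    refine lintegral_congr fun u => ?_
    have hfK : Measurable fun x => f x * K x (u 0) := hf.mul (hK.comp measurable_prodMk_right)
    rw [kernelOperator, ← lintegral_mul_const _ hfK]
    simp [Fin.prod_univ_succ, mul_assoc, MeasurableEquiv.piFinSuccAbove]

end KernelOperator

lemma ae_injective_pi {α ι : Type*} [MeasurableSpace α] [MeasurableEq α]
    (μ : Measure α) [IsProbabilityMeasure μ] [NullSingletonClass μ] [Fintype ι] :
    ∀ᵐ u ∂Measure.pi (fun _ : ι => μ), Function.Injective u := by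
  have hne : ∀ i j : ι, i ≠ j → ∀ᵐ u ∂Measure.pi (fun _ : ι => μ), u i ≠ u j := by
    intro i j hij
    have hind := (ProbabilityTheory.iIndepFun_pi (μ := fun _ : ι => μ) (X := fun _ x => x)
      fun _ => aemeasurable_id).indepFun hij
    have hmap := hind.map_prod_eq_prod_map_map (measurable_pi_apply i).aemeasurable
      (measurable_pi_apply j).aemeasurable
    rw [(measurePreserving_eval _ i).map_eq, (measurePreserving_eval _ j).map_eq] at hmap
    have hdiag : μ.prod μ (Set.diagonal α) = 0 :=
      Measure.measure_prod_null_of_ae_null measurableSet_diagonal <| .of_forall fun x => by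
        simp [Set.preimage, Set.diagonal]
    rw [← hmap, Measure.map_apply (by fun_prop) measurableSet_diagonal] at hdiag
    simpa [ae_iff, Set.preimage, Set.diagonal] using hdiag
  filter_upwards [ae_all_iff.2 fun i => ae_all_iff.2 fun j => ae_all_iff.2 (hne i j)]
    with u hu i j
  exact not_imp_not.1 (hu i j)

/-- `u` is alternating: its entries satisfy `u 0 > u 1 < u 2 > u 3 < ⋯`. -/
def IsAlternating {α : Type*} [LT α] {n : ℕ} (u : Fin n → α) : Prop :=
  ∀ (i : ℕ) (h : i + 1 < n),
    (Even i → u ⟨i + 1, h⟩ < u ⟨i, Nat.lt_of_succ_lt h⟩) ∧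
    (Odd i → u ⟨i, Nat.lt_of_succ_lt h⟩ < u ⟨i + 1, h⟩)

section RelativeOrder

variable {α : Type*} [LinearOrder α] {n : ℕ}

/-- The tuples in `α` without repetitions whose entries are in the same relative order as those
of the permutation `τ`. -/
def orderCell (α : Type*) [LinearOrder α] {n : ℕ} (τ : Equiv.Perm (Fin n)) : Set (Fin n → α) :=
  {u | StrictMono (u ∘ τ.symm)}

lemma lt_iff_of_mem_orderCell {τ : Equiv.Perm (Fin n)} {u : Fin n → α} (hu : u ∈ orderCell α τ)
    (i j : Fin n) : u i < u j ↔ τ i < τ j := by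
  simpa using StrictMono.lt_iff_lt hu (a := τ i) (b := τ j)

lemma isAlternating_iff_of_mem_orderCell {τ : Equiv.Perm (Fin n)} {u : Fin n → α}
    (hu : u ∈ orderCell α τ) : IsAlternating u ↔ IsAlternating τ := by
  simp only [IsAlternating, lt_iff_of_mem_orderCell hu]

lemma pairwise_disjoint_orderCell :
    Pairwise (Function.onFun Disjoint (orderCell α (n := n))) := by
  refine fun τ τ' hne => Set.disjoint_left.2 fun u hτ hτ' => hne ?_
  have hu : Function.Injective u := (StrictMono.injective hτ).of_comp_right τ.symm.surjective
  have hcomp := Tuple.unique_monotone (StrictMono.monotone hτ) (StrictMono.monotone hτ')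
  exact Equiv.symm_bijective.injective (DFunLike.coe_injective (hu.comp_left hcomp))

lemma exists_mem_orderCell {u : Fin n → α} (hu : Function.Injective u) :
    ∃ τ, u ∈ orderCell α τ :=
  ⟨(Tuple.sort u).symm, (Tuple.monotone_sort u).strictMono_of_injective
    (hu.comp (Tuple.sort u).injective)⟩

section Measure

variable [TopologicalSpace α] [OrderClosedTopology α] [SecondCountableTopology α]
  [MeasurableSpace α] [OpensMeasurableSpace α]

lemma measurableSet_orderCell (τ : Equiv.Perm (Fin n)) : MeasurableSet (orderCell α τ) := by
  simp only [orderCell, StrictMono, Set.ofPred_forall]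
  exact .iInter fun i => .iInter fun j => .iInter fun _ =>
    measurableSet_lt (measurable_pi_apply _) (measurable_pi_apply _)

variable (μ : Measure α) [IsProbabilityMeasure μ]

lemma measure_orderCell_eq (τ : Equiv.Perm (Fin n)) :
    Measure.pi (fun _ => μ) (orderCell α τ) =
      Measure.pi (fun _ => μ) (orderCell α (1 : Equiv.Perm (Fin n))) := by
  have hperm := measurePreserving_piCongrLeft (fun _ : Fin n => μ) τ
  rw [← hperm.measure_preimage (measurableSet_orderCell 1).nullMeasurableSet]
  congr 1
  ext u
  have hcomp : MeasurableEquiv.piCongrLeft (fun _ => α) τ u = u ∘ τ.symm := by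
    ext i
    obtain ⟨k, rfl⟩ := τ.surjective i
    simp [MeasurableEquiv.coe_piCongrLeft, Equiv.piCongrLeft_apply_apply]
  rw [Set.mem_preimage, hcomp]
  rfl

variable [NullSingletonClass μ]

lemma measure_orderCell (τ : Equiv.Perm (Fin n)) :
    Measure.pi (fun _ => μ) (orderCell α τ) = (n.factorial : ℝ≥0∞)⁻¹ := by
  have hcover : (⋃ τ, orderCell α τ) =ᵐ[Measure.pi fun _ : Fin n => μ] Set.univ := by
    refine eventuallyEq_univ.2 ?_
    filter_upwards [ae_injective_pi μ] with u hu
    exact Set.mem_iUnion.2 (exists_mem_orderCell hu)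
  have hsum := measure_congr hcover
  rw [measure_iUnion pairwise_disjoint_orderCell measurableSet_orderCell, tsum_fintype,
    measure_univ] at hsum
  simp only [measure_orderCell_eq μ, Finset.sum_const, Finset.card_univ, Fintype.card_perm,
    Fintype.card_fin, nsmul_eq_mul] at hsum
  rw [measure_orderCell_eq]
  exact ENNReal.eq_inv_of_mul_eq_one_left (by rwa [mul_comm])

theorem measure_setOf_isAlternating (n : ℕ) :
    Measure.pi (fun _ => μ) {u : Fin n → α | IsAlternating u} =
      eulerNumber n * (n.factorial : ℝ≥0∞)⁻¹ := by
  classical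
  have hcover : {u : Fin n → α | IsAlternating u} =ᵐ[Measure.pi fun _ => μ]
      ⋃ τ : {τ : Equiv.Perm (Fin n) // IsAlternating τ}, orderCell α τ.1 := by
    filter_upwards [ae_injective_pi μ] with u hu
    obtain ⟨τ, hτ⟩ := exists_mem_orderCell hu
    refine propext ⟨fun h => ?_, fun h => ?_⟩
    · exact Set.mem_iUnion.2 ⟨⟨τ, (isAlternating_iff_of_mem_orderCell hτ).1 h⟩, hτ⟩
    · obtain ⟨⟨τ', hτ'⟩, h⟩ := Set.mem_iUnion.1 h
      exact (isAlternating_iff_of_mem_orderCell h).2 hτ'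
  rw [measure_congr hcover,
    measure_iUnion (pairwise_disjoint_orderCell.comp_of_injective Subtype.val_injective)
      fun τ => measurableSet_orderCell τ.1, tsum_fintype]
  simp only [measure_orderCell, Finset.sum_const, nsmul_eq_mul, Finset.card_univ]
  rw [← Nat.card_eq_fintype_card]
  rfl

end Measure

end RelativeOrder

section TriangleKernel

open unitInterval

/-- The indicator function of the triangle `x + y < 1` in the unit square. -/
def triangleKernel (x y : I) : ℝ≥0∞ :=
  if x < σ y then 1 else 0

lemma lt_symm_comm {x y : I} : x < σ y ↔ y < σ x := by
  rw [← Subtype.coe_lt_coe, ← Subtype.coe_lt_coe, coe_symm_eq, coe_symm_eq, lt_sub_comm]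

lemma measurable_triangleKernel : Measurable (Function.uncurry triangleKernel) :=
  Measurable.ite (measurableSet_lt measurable_fst (measurable_symm.comp measurable_snd))
    measurable_const measurable_const

lemma kernelOperator_triangleKernel (f : I → ℝ≥0∞) (y : I) :
    kernelOperator volume triangleKernel f y = ∫⁻ x in Set.Iio (σ y), f x := by
  rw [← lintegral_indicator measurableSet_Iio]
  refine lintegral_congr fun x => ?_
  simp [triangleKernel, Set.indicator_apply]

lemma kernelOperator_triangleKernel_zero (f : I → ℝ≥0∞) :
    kernelOperator volume triangleKernel f 0 = ∫⁻ x, f x := by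
  have hIio : Set.Iio (1 : I) =ᵐ[volume] Set.univ := by
    rw [← Set.Iic_top]
    exact Iio_ae_eq_Iic
  rw [kernelOperator_triangleKernel, symm_zero, setLIntegral_congr hIio, setLIntegral_univ]

lemma kernelOperator_triangleKernel_one (y : I) :
    kernelOperator volume triangleKernel 1 y = ENNReal.ofReal (1 - y) := by
  simp [kernelOperator_triangleKernel]

lemma kernelComp_triangleKernel (x y : I) :
    kernelComp volume triangleKernel triangleKernel x y =
      ENNReal.ofReal (min (1 - x) (1 - y)) := by
  have hprod : ∀ z, triangleKernel x z * triangleKernel z y =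
      (Set.Iio (min (σ x) (σ y))).indicator 1 z := fun z => by
    simp [triangleKernel, lt_symm_comm (x := x), Set.indicator_apply, ← ite_and, and_comm]
  simp only [kernelComp, hprod]
  rw [lintegral_indicator_one measurableSet_Iio, volume_Iio]
  simp

lemma setLIntegral_Iio_ofReal {g : ℝ → ℝ} (hg : ContinuousOn g I) (hg0 : ∀ x ∈ I, 0 ≤ g x) (a : I) :
    ∫⁻ x : I in Set.Iio a, ENNReal.ofReal (g x) = ENNReal.ofReal (∫ x in (0 : ℝ)..a, g x) := by
  have hIco : Set.Ico (0 : ℝ) a ⊆ I := fun x hx => ⟨hx.1, hx.2.le.trans a.2.2⟩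
  have hIio : Set.Iio (a : ℝ) ∩ I = Set.Ico 0 (a : ℝ) := by
    ext x
    exact ⟨fun h => ⟨h.2.1, h.1⟩, fun h => ⟨h.2, hIco h⟩⟩
  calc ∫⁻ x : I in Set.Iio a, ENNReal.ofReal (g x)
      = ∫⁻ x in Set.Iio (a : ℝ), ENNReal.ofReal (g x) ∂volume.restrict I :=
        measurePreserving_coe.setLIntegral_comp_preimage_emb measurableEmbedding_coe
          (fun x => ENNReal.ofReal (g x)) (Set.Iio (a : ℝ))
    _ = ∫⁻ x in Set.Ico (0 : ℝ) a, ENNReal.ofReal (g x) := by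
        rw [Measure.restrict_restrict measurableSet_Iio, hIio]
    _ = ENNReal.ofReal (∫ x in Set.Ico (0 : ℝ) a, g x) := by
        refine (ofReal_integral_eq_lintegral_ofReal ?_ ?_).symm
        · exact (hg.integrableOn_compact isCompact_Icc).mono_set hIco
        · exact (ae_restrict_iff' measurableSet_Ico).2 (.of_forall fun x hx => hg0 x (hIco hx))
    _ = ENNReal.ofReal (∫ x in (0 : ℝ)..a, g x) := by
        rw [intervalIntegral.integral_of_le a.2.1, integral_Ico_eq_integral_Ioc]

/-- The function `cos (π x / 2)`, which is the positive eigenfunction of the integral operator with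
kernel `triangleKernel`. -/
def cosineDensity (x : I) : ℝ≥0∞ :=
  ENNReal.ofReal (Real.cos (Real.pi / 2 * x))

lemma cos_pi_div_two_mul (x : ℝ) :
    Real.cos (Real.pi / 2 * x) = Real.sin (Real.pi / 2 * (1 - x)) := by
  rw [mul_sub, mul_one, Real.sin_pi_div_two_sub]

lemma cos_pi_div_two_mul_nonneg {x : ℝ} (hx : x ∈ I) : 0 ≤ Real.cos (Real.pi / 2 * x) :=
  Real.cos_nonneg_of_mem_Icc
    ⟨by nlinarith [Real.pi_pos, hx.1], by nlinarith [Real.pi_pos, hx.2]⟩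

lemma cosineDensity_le_one : cosineDensity ≤ 1 :=
  fun _ => ENNReal.ofReal_le_one.2 (Real.cos_le_one _)

lemma kernelOperator_triangleKernel_one_le :
    kernelOperator volume triangleKernel 1 ≤ cosineDensity := by
  intro y
  rw [kernelOperator_triangleKernel_one, cosineDensity, cos_pi_div_two_mul]
  refine ENNReal.ofReal_le_ofReal ?_
  have hy : (0 : ℝ) ≤ 1 - y := sub_nonneg.2 y.2.2
  calc (1 - y : ℝ) = 2 / Real.pi * (Real.pi / 2 * (1 - y)) := by field_simp
    _ ≤ Real.sin (Real.pi / 2 * (1 - y)) :=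
        Real.mul_le_sin (by positivity) (by nlinarith [Real.pi_pos, y.2.1])

lemma kernelOperator_triangleKernel_cosineDensity :
    kernelOperator volume triangleKernel cosineDensity =
      ENNReal.ofReal (2 / Real.pi) • cosineDensity := by
  ext y
  have hint : ∫ x in (0 : ℝ)..σ y, Real.cos (Real.pi / 2 * x) =
      2 / Real.pi * Real.cos (Real.pi / 2 * y) := by
    rw [intervalIntegral.integral_comp_mul_left Real.cos (by positivity), integral_cos,
      cos_pi_div_two_mul]
    simp
  rw [kernelOperator_triangleKernel, Pi.smul_apply, smul_eq_mul]
  simp only [cosineDensity]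
  rw [setLIntegral_Iio_ofReal (by fun_prop) fun x => cos_pi_div_two_mul_nonneg, hint,
    ENNReal.ofReal_mul (by positivity)]

end TriangleKernel

section EulerNumber

open unitInterval

lemma measurePreserving_symm_even {n : ℕ} :
    MeasurePreserving
      (fun (u : Fin n → I) (i : Fin n) => if Even (i : ℕ) then σ (u i) else u i) := by
  refine volume_preserving_pi (f := fun (i : Fin n) x => if Even (i : ℕ) then σ x else x)
    fun i => ?_
  split_ifs
  exacts [measurePreserving_symm, .id _]

lemma isAlternating_iff_forall_lt_symm {n : ℕ} (u : Fin (n + 1) → I) :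
    IsAlternating u ↔ ∀ i : Fin n,
      (if Even (i : ℕ) then σ (u i.castSucc) else u i.castSucc) <
        σ (if Even (i + 1 : ℕ) then σ (u i.succ) else u i.succ) := by
  refine Fin.forall_iff.trans ?_ |>.symm
  refine forall_congr' fun i => ?_
  simp only [Nat.add_lt_add_iff_right]
  refine forall_congr' fun hi => ?_
  rcases Nat.even_or_odd i with he | ho
  · simp [he, Nat.even_add_one]
  · simp [ho, Nat.not_even_iff_odd.2 ho]

/-- Replacing the entries of even index by their reflections `1 - u i` turns alternation into the
condition that any two consecutive entries have sum less than `1`. -/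
theorem lintegral_iterate_triangleKernel (n : ℕ) :
    ∫⁻ x, (kernelOperator volume triangleKernel)^[n] 1 x =
      eulerNumber (n + 1) * ((n + 1).factorial : ℝ≥0∞)⁻¹ := by
  let B : Set (Fin (n + 1) → I) := {u | ∀ i : Fin n, u i.castSucc < σ (u i.succ)}
  have hB : MeasurableSet B := by
    simp only [B, Set.ofPred_forall]
    exact .iInter fun i => measurableSet_lt (by fun_prop)
      (measurable_symm.comp (measurable_pi_apply _))
  have hprod : ∀ u : Fin (n + 1) → I, (1 : I → ℝ≥0∞) (u 0) *
      ∏ i : Fin n, triangleKernel (u i.castSucc) (u i.succ) = B.indicator 1 u := fun u => by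
    simp [triangleKernel, Finset.prod_ite_zero, Set.indicator_apply, B]
  rw [← lintegral_mul_prod_path volume measurable_triangleKernel measurable_one]
  simp only [hprod]
  rw [lintegral_indicator_one hB, ← measure_setOf_isAlternating (volume : Measure I), ← volume_pi,
    ← measurePreserving_symm_even.measure_preimage hB.nullMeasurableSet]
  simp only [isAlternating_iff_forall_lt_symm]
  rfl

lemma eulerNumber_div_factorial_eq_iterate (n : ℕ) :
    (eulerNumber (n + 1) : ℝ) / (n + 1).factorial =
      ((kernelOperator volume triangleKernel)^[n + 1] 1 0).toReal := by
  rw [Function.iterate_succ_apply', kernelOperator_triangleKernel_zero,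
    lintegral_iterate_triangleKernel]
  simp [div_eq_mul_inv]

theorem eulerNumber_div_factorial_mem_Icc (n : ℕ) :
    (eulerNumber (n + 1) : ℝ) / (n + 1).factorial ∈
      Set.Icc ((2 / Real.pi) ^ (n + 1)) ((2 / Real.pi) ^ n) := by
  have hr : 0 ≤ 2 / Real.pi := by positivity
  have hmono := kernelOperator_mono volume triangleKernel
  have heigen : ∀ k, (kernelOperator volume triangleKernel)^[k] cosineDensity 0 =
      ENNReal.ofReal ((2 / Real.pi) ^ k) := fun k => by
    rw [kernelOperator_iterate_eigen volume ENNReal.ofReal_ne_top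
      kernelOperator_triangleKernel_cosineDensity, ENNReal.ofReal_pow hr]
    simp [cosineDensity]
  have hlower := hmono.iterate (n + 1) cosineDensity_le_one 0
  have hupper := hmono.iterate n kernelOperator_triangleKernel_one_le 0
  rw [heigen] at hlower hupper
  rw [eulerNumber_div_factorial_eq_iterate]
  rw [← Function.iterate_succ_apply] at hupper
  exact ⟨(ENNReal.ofReal_le_iff_le_toReal (ne_top_of_le_ne_top ENNReal.ofReal_ne_top hupper)).1
    hlower, ENNReal.toReal_le_of_le_ofReal (by positivity) hupper⟩

end EulerNumber

section McCormick

/-- The McCormick interval of a pair `s(x, y)`: the values that the relaxation allows for an edge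
variable whose end vertices take the values `x` and `y`. -/
def mccormickInterval : Sym2 ℝ → Set ℝ :=
  Sym2.lift ⟨fun x y => Set.Icc (max 0 (x + y - 1)) (min x y), fun x y => by
    simp only [add_comm x, min_comm x]⟩

lemma mem_mccormickInterval {x y z : ℝ} :
    z ∈ mccormickInterval s(x, y) ↔ 0 ≤ z ∧ z ≤ x ∧ z ≤ y ∧ x + y ≤ 1 + z := by
  simp only [mccormickInterval, Sym2.lift_mk, Set.mem_Icc, max_le_iff, le_min_iff,
    sub_le_iff_le_add']
  tauto

variable {V : Type*} {G : SimpleGraph V}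

lemma mem_QSet {p : (V → ℝ) × (G.edgeSet → ℝ)} :
    p ∈ QSet G ↔ (∀ i, p.1 i ∈ unitInterval) ∧
      ∀ e : G.edgeSet, p.2 e ∈ mccormickInterval (e.1.map p.1) := by
  refine ⟨fun ⟨hV, _, hadj⟩ => ⟨hV, ?_⟩, fun ⟨hV, hE⟩ => ⟨hV, ?_, fun i j h => ?_⟩⟩
  · rintro ⟨⟨i, j⟩, h⟩
    exact mem_mccormickInterval.2 (hadj i j h)
  · rintro ⟨⟨i, j⟩, h⟩
    obtain ⟨hz, hzi, -⟩ := mem_mccormickInterval.1 (hE ⟨s(i, j), h⟩)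
    exact ⟨hz, hzi.trans (hV i).2⟩
  · exact mem_mccormickInterval.1 (hE ⟨s(i, j), h⟩)

lemma isClosed_QSet : IsClosed (QSet G) := by
  have hE (e : G.edgeSet) : IsClosed
      {p : (V → ℝ) × (G.edgeSet → ℝ) | p.2 e ∈ mccormickInterval (e.1.map p.1)} := by
    obtain ⟨⟨i, j⟩, h⟩ := e
    change IsClosed ({p : (V → ℝ) × (G.edgeSet → ℝ) |
      max 0 (p.1 i + p.1 j - 1) ≤ p.2 ⟨s(i, j), h⟩} ∩ {p | p.2 ⟨s(i, j), h⟩ ≤ min (p.1 i) (p.1 j)})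
    exact (isClosed_le (by fun_prop) (by fun_prop)).inter (isClosed_le (by fun_prop) (by fun_prop))
  have hQ : QSet G = (⋂ i, {p | p.1 i ∈ unitInterval}) ∩
      ⋂ e : G.edgeSet, {p | p.2 e ∈ mccormickInterval (e.1.map p.1)} := by
    ext p
    simp [mem_QSet]
  rw [hQ]
  exact (isClosed_iInter fun i => isClosed_Icc.preimage (by fun_prop)).inter (isClosed_iInter hE)

theorem volume_QSet [Fintype V] [Fintype G.edgeSet] :
    volume (QSet G) = ∫⁻ x : V → unitInterval,
      ∏ e : G.edgeSet, volume (mccormickInterval (e.1.map fun i => (x i : ℝ))) := by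
  have hcoe : MeasurePreserving (fun (x : V → unitInterval) i => (x i : ℝ)) volume
      (volume.restrict (Set.univ.pi fun _ => unitInterval)) := by
    rw [volume_pi, volume_pi, Measure.restrict_pi_pi]
    exact measurePreserving_pi _ _ fun _ => unitInterval.measurePreserving_coe
  have hslice (x : V → unitInterval) : Prod.mk (fun i => (x i : ℝ)) ⁻¹' QSet G =
      Set.univ.pi fun e : G.edgeSet => mccormickInterval (e.1.map fun i => (x i : ℝ)) := by
    ext y
    simp [mem_QSet]
  have hsupport : (Function.support fun x : V → ℝ => volume (Prod.mk x ⁻¹' QSet G)) ⊆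
      Set.univ.pi fun _ => unitInterval := fun x hx => by
    obtain ⟨y, hy⟩ := nonempty_of_measure_ne_zero hx
    exact fun i _ => (mem_QSet.1 hy).1 i
  have hmeas := isClosed_QSet (G := G).measurableSet
  rw [Measure.volume_eq_prod, Measure.prod_apply hmeas,
    ← setLIntegral_eq_of_support_subset hsupport,
    ← hcoe.lintegral_comp (measurable_measure_prodMk_left hmeas)]
  simp only [hslice, volume_pi, Measure.pi_pi]

end McCormick

section Fold

open unitInterval

/-- The unit interval folded in half at its midpoint and stretched back to unit length, sending
`x` to `|2 x - 1|`. In these coordinates the length of a McCormick interval is a composed kernel. -/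
def foldUnitInterval (x : I) : I :=
  ⟨|2 * (x : ℝ) - 1|, abs_nonneg _, abs_le.2 ⟨by linarith [x.2.1], by linarith [x.2.2]⟩⟩

lemma measurable_foldUnitInterval : Measurable foldUnitInterval :=
  Measurable.subtype_mk (by fun_prop)

lemma measurePreserving_foldUnitInterval : MeasurePreserving foldUnitInterval := by
  refine ⟨measurable_foldUnitInterval, Measure.ext_of_Iic _ _ fun a => ?_⟩
  let l : I := ⟨(1 - a) / 2, by constructor <;> linarith [a.2.1, a.2.2]⟩
  let r : I := ⟨(1 + a) / 2, by constructor <;> linarith [a.2.1, a.2.2]⟩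
  have hpre : foldUnitInterval ⁻¹' Set.Iic a = Set.Icc l r := by
    ext x
    simp only [foldUnitInterval, Set.mem_preimage, Set.mem_Iic, Set.mem_Icc,
      ← Subtype.coe_le_coe, abs_le, l, r]
    constructor <;> rintro ⟨h, h'⟩ <;> constructor <;> linarith
  rw [Measure.map_apply measurable_foldUnitInterval measurableSet_Iic, hpre, volume_Icc, volume_Iic]
  congr 1
  simp only [l, r]
  ring

lemma min_sub_max_eq_half_min (x y : ℝ) :
    min x y - max 0 (x + y - 1) = 1 / 2 * min (1 - |2 * x - 1|) (1 - |2 * y - 1|) := by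
  grind

theorem volume_mccormickInterval (x y : I) :
    volume (mccormickInterval s((x : ℝ), (y : ℝ))) =
      2⁻¹ * kernelComp volume triangleKernel triangleKernel
        (foldUnitInterval x) (foldUnitInterval y) := by
  rw [kernelComp_triangleKernel, mccormickInterval, Sym2.lift_mk, Real.volume_Icc,
    min_sub_max_eq_half_min, ENNReal.ofReal_mul (by norm_num), one_div,
    ENNReal.ofReal_inv_of_pos two_pos, ENNReal.ofReal_ofNat]
  rfl

end Fold

section Path

variable {m : ℕ}

lemma pathG_adj {i j : Fin (m + 1)} :
    (pathG m).Adj i j ↔ (i : ℕ) + 1 = j ∨ (j : ℕ) + 1 = i := by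
  simp only [pathG, SimpleGraph.fromRel_adj, ne_eq, Fin.ext_iff]
  omega

/-- The edge of `P_m` joining the vertices `i` and `i + 1`, so that `Fin m` indexes the edges. -/
def pathEdge (i : Fin m) : (pathG m).edgeSet :=
  ⟨s(i.castSucc, i.succ), pathG_adj.2 (.inl rfl)⟩

lemma pathEdge_injective : Function.Injective (pathEdge (m := m)) := by
  intro i j h
  have h : s(i.castSucc, i.succ) = s(j.castSucc, j.succ) := congrArg Subtype.val h
  simp only [Sym2.eq_iff, Fin.ext_iff, Fin.val_castSucc, Fin.val_succ] at h
  omega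

lemma pathEdge_surjective : Function.Surjective (pathEdge (m := m)) := by
  rintro ⟨⟨i, j⟩, h⟩
  wlog hij : (i : ℕ) + 1 = j generalizing i j
  · obtain ⟨k, hk⟩ := this j i ((pathG m).adj_symm h) ((pathG_adj.1 h).resolve_left hij)
    exact ⟨k, hk.trans (Subtype.ext Sym2.eq_swap)⟩
  · obtain ⟨k, rfl⟩ : ∃ k : Fin m, k.succ = j := Fin.exists_succ_eq.2 (by grind)
    obtain rfl : i = k.castSucc := by grind
    exact ⟨k, rfl⟩

lemma prod_edgeSet_pathG {M : Type*} [CommMonoid M] [Fintype (pathG m).edgeSet]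
    (f : (pathG m).edgeSet → M) : ∏ e, f e = ∏ i : Fin m, f (pathEdge i) :=
  ((Equiv.ofBijective pathEdge ⟨pathEdge_injective, pathEdge_surjective⟩).prod_comp f).symm

theorem volume_QSet_pathG (m : ℕ) :
    volume (QSet (pathG m)) =
      (2 ^ m)⁻¹ * (eulerNumber (2 * m + 1) * ((2 * m + 1).factorial : ℝ≥0∞)⁻¹) := by
  let K := kernelComp (volume : Measure unitInterval) triangleKernel triangleKernel
  have hK : Measurable (Function.uncurry K) :=
    measurable_kernelComp volume measurable_triangleKernel measurable_triangleKernel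
  have hpath := measurable_mul_prod_path hK measurable_one m
  have hfold : MeasurePreserving fun (u : Fin (m + 1) → unitInterval) i => foldUnitInterval (u i) :=
    volume_preserving_pi fun _ => measurePreserving_foldUnitInterval
  calc volume (QSet (pathG m))
      = ∫⁻ x : Fin (m + 1) → unitInterval,
          ∏ i : Fin m, 2⁻¹ * K (foldUnitInterval (x i.castSucc)) (foldUnitInterval (x i.succ)) := by
        simp only [volume_QSet, prod_edgeSet_pathG, pathEdge, Sym2.map_mk,
          volume_mccormickInterval, K]
    _ = (2 ^ m)⁻¹ * ∫⁻ x : Fin (m + 1) → unitInterval,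
          ∏ i : Fin m, K (foldUnitInterval (x i.castSucc)) (foldUnitInterval (x i.succ)) := by
        simp only [Finset.prod_mul_distrib, Finset.prod_const, Finset.card_univ, Fintype.card_fin]
        rw [lintegral_const_mul' _ _ (by simp), ENNReal.inv_pow]
    _ = (2 ^ m)⁻¹ * ∫⁻ u : Fin (m + 1) → unitInterval,
          ∏ i : Fin m, K (u i.castSucc) (u i.succ) := by
        simpa using congrArg _ (hfold.lintegral_comp hpath)
    _ = (2 ^ m)⁻¹ * ∫⁻ x, (kernelOperator volume K)^[m] 1 x := by
        simpa [volume_pi] using congrArg _ (lintegral_mul_prod_path volume hK measurable_one m)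
    _ = (2 ^ m)⁻¹ * (eulerNumber (2 * m + 1) * ((2 * m + 1).factorial : ℝ≥0∞)⁻¹) := by
        rw [← kernelOperator_iterate_two_mul volume measurable_triangleKernel measurable_one,
          lintegral_iterate_triangleKernel]

theorem toReal_volume_QSet_pathG (m : ℕ) :
    (volume (QSet (pathG m))).toReal =
      (eulerNumber (2 * m + 1) : ℝ) / (2 ^ m * (2 * m + 1).factorial) := by
  rw [volume_QSet_pathG]
  simp only [ENNReal.toReal_mul, ENNReal.toReal_inv, ENNReal.toReal_pow, ENNReal.toReal_ofNat,
    ENNReal.toReal_natCast]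
  field_simp

end Path

section RootLimit

theorem tendsto_root_eulerNumber_div_factorial :
    Tendsto (fun n : ℕ => ((eulerNumber n : ℝ) / n.factorial) ^ (1 / (n : ℝ))) atTop
      (nhds (2 / Real.pi)) := by
  have hr : 0 < 2 / Real.pi := by positivity
  have hupper : Tendsto (fun n : ℕ => (2 / Real.pi) ^ ((n : ℝ) / (n + 1))) atTop
      (nhds (2 / Real.pi)) := by
    simpa using tendsto_const_nhds.rpow (tendsto_natCast_div_add_atTop (1 : ℝ)) (.inl hr.ne')
  refine (tendsto_add_atTop_iff_nat 1).1 ?_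
  refine tendsto_of_tendsto_of_tendsto_of_le_of_le tendsto_const_nhds hupper (fun n => ?_)
    fun n => ?_
  · calc 2 / Real.pi = ((2 / Real.pi) ^ (n + 1)) ^ (1 / ((n + 1 : ℕ) : ℝ)) := by
          rw [one_div, Real.pow_rpow_inv_natCast hr.le n.succ_ne_zero]
      _ ≤ _ := by
          gcongr
          exact (eulerNumber_div_factorial_mem_Icc n).1
  · calc ((eulerNumber (n + 1) : ℝ) / (n + 1).factorial) ^ (1 / ((n + 1 : ℕ) : ℝ))
        ≤ ((2 / Real.pi) ^ n) ^ (1 / ((n + 1 : ℕ) : ℝ)) := by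
          gcongr
          exact (eulerNumber_div_factorial_mem_Icc n).2
      _ = (2 / Real.pi) ^ ((n : ℝ) / (n + 1)) := by
          rw [← Real.rpow_natCast_mul hr.le, mul_one_div, Nat.cast_succ]

lemma tendsto_two_pow_root :
    Tendsto (fun m : ℕ => ((2 : ℝ) ^ m) ^ (1 / (2 * (m : ℝ) + 1))) atTop (nhds (Real.sqrt 2)) := by
  have hexp : Tendsto (fun m : ℕ => (m : ℝ) / (2 * m + 1)) atTop (nhds (1 / 2)) := by
    have h := (tendsto_natCast_div_add_atTop (1 / 2 : ℝ)).div_const 2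
    refine h.congr fun m => ?_
    field_simp
  rw [Real.sqrt_eq_rpow]
  refine (tendsto_const_nhds.rpow hexp (.inl two_ne_zero)).congr fun m => ?_
  rw [← Real.rpow_natCast_mul two_pos.le, mul_one_div]

end RootLimit

/-- `vol Q(P_m)^(1/(2m+1)) → √2 / π`; equivalently
`(A_{2m+1}/(2^m (2m+1)!))^(1/(2m+1)) → √2 / π`. -/
theorem tendsto_root_volume_QSet_path :
    Tendsto (fun m : ℕ =>
      (volume (QSet (pathG m))).toReal ^ (1 / (2 * (m : ℝ) + 1)))
      atTop (nhds (Real.sqrt 2 / Real.pi)) ∧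
    Tendsto (fun m : ℕ =>
      ((eulerNumber (2 * m + 1) : ℝ) / (2 ^ m * Nat.factorial (2 * m + 1))) ^
        (1 / (2 * (m : ℝ) + 1)))
      atTop (nhds (Real.sqrt 2 / Real.pi)) := by
  simp only [toReal_volume_QSet_pathG, and_self]
  have hodd : Tendsto (fun m : ℕ => 2 * m + 1) atTop atTop :=
    tendsto_atTop_mono (fun m => show m ≤ 2 * m + 1 by lia) tendsto_id
  have heuler := tendsto_root_eulerNumber_div_factorial.comp hodd
  have hlim : 2 / Real.pi / Real.sqrt 2 = Real.sqrt 2 / Real.pi := by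
    rw [div_right_comm, Real.div_sqrt]
  rw [← hlim]
  refine (heuler.div tendsto_two_pow_root (by positivity)).congr fun m => ?_
  rw [mul_comm (2 ^ m), ← div_div, Real.div_rpow (by positivity) (by positivity)]
  simp
end
end

section
/- As m tends to infinity: (a) the (2m)-th root of the 2m-dimensional Lebesgue volume of Q(C_m) tends to sqrt(2)/pi; and (b) m times the (2m)-th root of the 2m-dimensional Lebesgue volume of the set difference Q(C_m) \ P(C_m) tends to e/sqrt(2). -/
open MeasureTheory Filter

noncomputable section

/-- The boolean quadric polytope `P(G)` of a graph `G`: the convex hull of the 0/1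
points with `y_{ij} = x_i * x_j` for every edge `(i,j)`. -/
def BQPSet {V : Type*} (G : SimpleGraph V) : Set ((V → ℝ) × (↥G.edgeSet → ℝ)) :=
  convexHull ℝ {p | (∀ i, p.1 i = 0 ∨ p.1 i = 1) ∧
    ∀ (i j : V) (h : G.Adj i j),
      p.2 ⟨s(i, j), (SimpleGraph.mem_edgeSet _).mpr h⟩ = p.1 i * p.1 j}

/-- The cycle `C_m` with `m` vertices and (for `m ≥ 3`) `m` edges. -/
def cycleG (m : ℕ) : SimpleGraph (Fin m) :=
  SimpleGraph.fromRel (fun i j => ((i : ℕ) + 1) % m = (j : ℕ))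

instance (m : ℕ) : DecidableRel (cycleG m).Adj := fun i j =>
  decidable_of_iff _ (SimpleGraph.fromRel_adj _ i j).symm

/-!
For fixed `x`, the constraints of `Q(C_m)` confine the edge coordinates to independent intervals of
lengths `min (tent (x i)) (tent (x (i + 1)))`, where `tent s = min s (1 - s)`. The volume is
therefore the trace of the `m`-th power of the integral operator with kernel
`min (tent s) (tent t)`. Its Perron eigenfunction is `sin (π s)`, with eigenvalue `2 / π²`, and
squeezing the kernel along one edge of the cycle between multiples of products of the eigenfunction
and a bounded function gives the trace up to constant factors.

In `±1`-coordinates, `P(C_m)` is cut out of `Q(C_m)` by the odd-cycle inequalities, one for each of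
the `2 ^ (m - 1)` sign patterns with product `-1`: cut the cycle by chords into triangles, and glue
distributions of three signs along the chords. No two of these inequalities fail at the same point,
and the corner where a given one fails is an affine image of the standard simplex, of volume
`1 / (2 (2m)!)`. Stirling's formula does the rest.
-/

section Simplex

lemma measurePreserving_finCons {α : Type*} [MeasurableSpace α] (μ : Measure α) [SigmaFinite μ]
    (n : ℕ) :
    MeasurePreserving (fun p : α × (Fin n → α) => (Fin.cons p.1 p.2 : Fin (n + 1) → α))
      (μ.prod (Measure.pi fun _ => μ)) (Measure.pi fun _ => μ) := by
  simpa [MeasurableEquiv.piFinSuccAbove, Fin.insertNthEquiv_zero, Fin.consEquiv] using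
    (measurePreserving_piFinSuccAbove (fun _ : Fin (n + 1) => μ) 0).symm

/-- The solid simplex of size `s`, without its slanted facet. -/
def solidSimplex (ι : Type*) [Fintype ι] (s : ℝ) : Set (ι → ℝ) :=
  {w | (∀ i, 0 ≤ w i) ∧ ∑ i, w i < s}

lemma measurableSet_solidSimplex (ι : Type*) [Fintype ι] (s : ℝ) :
    MeasurableSet (solidSimplex ι s) := by
  rw [solidSimplex, Set.ofPred_and, Set.ofPred_forall]
  exact (MeasurableSet.iInter fun i => measurableSet_le measurable_const (by fun_prop)).inter
    (measurableSet_lt (by fun_prop) measurable_const)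

lemma finCons_mem_solidSimplex {n : ℕ} {s t : ℝ} {w : Fin n → ℝ} :
    (Fin.cons t w : Fin (n + 1) → ℝ) ∈ solidSimplex (Fin (n + 1)) s ↔
      t ∈ Set.Ico 0 s ∧ w ∈ solidSimplex (Fin n) (s - t) := by
  simp only [solidSimplex, Set.mem_ofPred_eq, Fin.forall_fin_succ, Fin.cons_zero, Fin.cons_succ,
    Fin.sum_univ_succ, Set.mem_Ico, lt_sub_iff_add_lt']
  refine ⟨fun ⟨⟨ht, hw⟩, hs⟩ => ⟨⟨ht, ?_⟩, hw, hs⟩, fun ⟨ht, hw, hs⟩ => ⟨⟨ht.1, hw⟩, hs⟩⟩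
  linarith [Finset.sum_nonneg fun i (_ : i ∈ Finset.univ) => hw i]

lemma integral_sub_pow_div_factorial (n : ℕ) (s : ℝ) :
    ∫ t in (0 : ℝ)..s, (s - t) ^ n / n.factorial = s ^ (n + 1) / (n + 1).factorial := by
  rw [intervalIntegral.integral_div, intervalIntegral.integral_comp_sub_left (fun x => x ^ n)]
  simp only [sub_self, sub_zero, integral_pow, Nat.factorial_succ]
  push_cast
  field_simp
  simp

lemma volume_solidSimplex_fin (n : ℕ) {s : ℝ} (hs : 0 < s) :
    volume (solidSimplex (Fin n) s) = ENNReal.ofReal (s ^ n / n.factorial) := by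
  induction n generalizing s with
  | zero => simp [solidSimplex, hs, volume_pi]
  | succ n ih =>
    have slice (t : ℝ) : volume {w | (Fin.cons t w : Fin (n + 1) → ℝ) ∈ solidSimplex _ s} =
        (Set.Ico 0 s).indicator (fun t => ENNReal.ofReal ((s - t) ^ n / n.factorial)) t := by
      simp only [finCons_mem_solidSimplex]
      by_cases ht : t ∈ Set.Ico 0 s
      · simp [ht, ← ih (sub_pos.2 ht.2)]
      · simp [ht]
    have hcons := measurePreserving_finCons (volume : Measure ℝ) n
    have hmeas := measurableSet_solidSimplex (Fin (n + 1)) s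
    rw [volume_pi, ← hcons.measure_preimage hmeas.nullMeasurableSet,
      Measure.prod_apply (hcons.measurable hmeas)]
    refine (lintegral_congr slice).trans ?_
    rw [lintegral_indicator measurableSet_Ico, restrict_Ico_eq_restrict_Ioc,
      ← ofReal_integral_eq_lintegral_ofReal, ← intervalIntegral.integral_of_le hs.le,
      integral_sub_pow_div_factorial]
    · exact (by fun_prop : Continuous fun t : ℝ => (s - t) ^ n / n.factorial).integrableOn_Ioc
    · filter_upwards [ae_restrict_mem measurableSet_Ioc] with t ht
      have : 0 ≤ s - t := sub_nonneg.2 ht.2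
      simp only [Pi.zero_apply]
      positivity

lemma volume_solidSimplex (ι : Type*) [Fintype ι] {s : ℝ} (hs : 0 < s) :
    volume (solidSimplex ι s) =
      ENNReal.ofReal (s ^ Fintype.card ι / (Fintype.card ι).factorial) := by
  have e := Fintype.equivFin ι
  rw [← volume_solidSimplex_fin _ hs,
    ← (volume_preserving_arrowCongr' e (MeasurableEquiv.refl ℝ) (.id _)).measure_preimage
      (measurableSet_solidSimplex _ _).nullMeasurableSet]
  congr 1
  ext w
  simp only [solidSimplex, Set.mem_preimage, Set.mem_ofPred_eq, ← e.symm.sum_comp w,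
    ← e.symm.forall_congr_right (q := fun i => 0 ≤ w i)]
  rfl

lemma volume_setOf_sumElim_mem {ι κ : Type*} [Fintype ι] [Fintype κ] (S : Set (ι ⊕ κ → ℝ)) :
    volume {p : (ι → ℝ) × (κ → ℝ) | Sum.elim p.1 p.2 ∈ S} = volume S :=
  (volume_measurePreserving_sumPiEquivProdPi (fun _ : ι ⊕ κ => ℝ)).symm.measure_preimage_equiv S

end Simplex

section LinearMaps

variable {ι E : Type*} [Fintype ι]

lemma volume_setOf_sub_mulVec_mem [DecidableEq ι] {M : Matrix ι ι ℝ} (hM : M.det ≠ 0) (c : ι → ℝ)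
    (A : Set (ι → ℝ)) :
    volume {x | c - M.mulVec x ∈ A} = ENNReal.ofReal |M.det⁻¹| * volume A := by
  have hdet : LinearMap.det (Matrix.toLin' M) ≠ 0 := by rwa [LinearMap.det_toLin']
  have hlin := Measure.addHaar_preimage_linearMap volume hdet ((fun y => c - y) ⁻¹' A)
  have hsub := (Measure.measurePreserving_sub_left (volume : Measure (ι → ℝ)) c)
    |>.measure_preimage_equiv (f := MeasurableEquiv.subLeft c) A
  rw [LinearMap.det_toLin'] at hlin
  rw [← hsub]
  exact hlin

lemma measurable_prodMk_sub_mulVec [MeasurableSpace E] (M : Matrix ι ι ℝ) {g : E → ι → ℝ}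
    (hg : Measurable g) : Measurable fun p : (ι → ℝ) × E => (p.2, g p.2 - M.mulVec p.1) :=
  measurable_snd.prodMk ((hg.comp measurable_snd).sub
    ((Matrix.mulVecLin M).continuous_of_finiteDimensional.measurable.comp measurable_fst))

lemma volume_setOf_prodMk_sub_mulVec_mem [DecidableEq ι] [MeasureSpace E]
    [SFinite (volume : Measure E)] {M : Matrix ι ι ℝ} (hM : M.det ≠ 0) {g : E → ι → ℝ}
    (hg : Measurable g) {S : Set (E × (ι → ℝ))} (hS : MeasurableSet S) :
    volume {p : (ι → ℝ) × E | (p.2, g p.2 - M.mulVec p.1) ∈ S} =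
      ENNReal.ofReal |M.det⁻¹| * volume S := by
  have hprod := Measure.prod_apply_symm (μ := volume) (ν := volume)
    (measurable_prodMk_sub_mulVec M hg hS)
  rw [Measure.volume_eq_prod E, Measure.prod_apply hS,
    ← lintegral_const_mul _ (measurable_measure_prodMk_left hS)]
  exact hprod.trans <| lintegral_congr fun t =>
    volume_setOf_sub_mulVec_mem hM (g t) (Prod.mk t ⁻¹' S)

lemma measurePreserving_units_mul (ε : ℤˣ) : MeasurePreserving fun t : ℝ => (ε : ℝ) * t := by
  rcases Int.units_eq_one_or ε with rfl | rfl
  · simp only [Units.val_one, Int.cast_one, one_mul]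
    exact .id _
  · simpa using Measure.measurePreserving_neg (volume : Measure ℝ)

lemma measurePreserving_shear_units_mul [MeasureSpace E] [SFinite (volume : Measure E)]
    {a : E → ι → ℝ} (ha : Measurable a) (ε : ι → ℤˣ) :
    MeasurePreserving fun p : E × (ι → ℝ) => (p.1, fun i => a p.1 i - ε i * p.2 i) := by
  refine MeasurePreserving.skew_product (f := id)
    (g := fun x (y : ι → ℝ) i => a x i - ε i * y i) (.id _) (by fun_prop) (.of_forall fun x => ?_)
  exact (volume_preserving_pi fun i => (Measure.measurePreserving_sub_left volume (a x i)).comp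
    (measurePreserving_units_mul (ε i))).map_eq

/-- The cyclic bidiagonal matrix `x ↦ (x i - ε i * x (i + 1))ᵢ`. It is written as a difference of
indicators, so that for `n = 0`, where the two diagonals coincide, the entry is `1 - ε 0`. -/
def cyclicBidiagonal {R : Type*} [Ring R] {n : ℕ} (ε : Fin (n + 1) → R) :
    Matrix (Fin (n + 1)) (Fin (n + 1)) R :=
  Matrix.of fun i j => (if j = i then 1 else 0) - if j = i + 1 then ε i else 0

lemma cyclicBidiagonal_mulVec {R : Type*} [Ring R] {n : ℕ} (ε x : Fin (n + 1) → R)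
    (i : Fin (n + 1)) : (cyclicBidiagonal ε).mulVec x i = x i - ε i * x (i + 1) := by
  simp [cyclicBidiagonal, Matrix.mulVec, dotProduct, sub_mul, Finset.sum_sub_distrib]

lemma det_cyclicBidiagonal {R : Type*} [CommRing R] {n : ℕ} (ε : Fin (n + 1) → R) :
    (cyclicBidiagonal ε).det = 1 - ∏ i, ε i := by
  -- Adding to each column `ε j` times the previous one clears the superdiagonal, and the corner
  -- entry travels along the last row, collecting the factors `ε j`.
  let A : Matrix (Fin (n + 1)) (Fin (n + 1)) R := .of fun i j => (if j = i then 1 else 0) -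
    if i = Fin.last n then ε i * Fin.partialProd (Fin.init ε) j else 0
  have hA : A.IsLowerTriangular := fun i j hij => by
    have hij : i < j := hij
    simp [A, hij.ne', (hij.trans_le (Fin.le_last j)).ne]
  have hdet : (cyclicBidiagonal ε).det = A.det := by
    refine (Matrix.det_eq_of_forall_col_eq_smul_add_pred (Fin.init ε) (fun i => ?_)
      fun i j => ?_).symm
    · rcases Fin.eq_castSucc_or_eq_last i with ⟨k, rfl⟩ | rfl
      · simp [A, cyclicBidiagonal, eq_comm]
      · simp [A, cyclicBidiagonal]
    · rcases Fin.eq_castSucc_or_eq_last i with ⟨k, rfl⟩ | rfl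
      · simp only [A, cyclicBidiagonal, Matrix.of_apply, Fin.init, Fin.coeSucc_eq_succ,
          Fin.succ_inj, Fin.castSucc_inj, Fin.castSucc_ne_last]
        grind
      · simp only [A, cyclicBidiagonal, Matrix.of_apply, Fin.init, Fin.partialProd_succ,
          Fin.last_add_one, Fin.succ_ne_zero, Fin.castSucc_ne_last]
        grind
  have hlast : Fin.partialProd (Fin.init ε) (Fin.last n) = ∏ i, Fin.init ε i := by
    simp [Fin.partialProd, List.prod_ofFn, List.take_of_length_le]
  rw [hdet, Matrix.det_of_isLowerTriangular _ hA, Fin.prod_univ_castSucc, Fin.prod_univ_castSucc]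
  simp [A, mul_comm, hlast, Fin.init]

end LinearMaps

section TransferOperator

lemma prod_cycle_eq_mul_prod_path {α M : Type*} [CommMonoid M] (K : α → α → M) (n : ℕ)
    (x : Fin (n + 1) → α) :
    ∏ i, K (x i) (x (i + 1)) =
      K (x (Fin.last n)) (x 0) * ∏ i : Fin n, K (x i.castSucc) (x i.succ) := by
  simp [Fin.prod_univ_castSucc, mul_comm]

variable {α : Type*} [MeasurableSpace α] {μ : Measure α} [SigmaFinite μ]
  {K : α → α → ENNReal} {φ g : α → ENNReal} {lam : ENNReal}

lemma lintegral_path (hK : Measurable (Function.uncurry K)) (hφ : Measurable φ) (hg : Measurable g)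
    (hlam : ∀ s, ∫⁻ t, φ t * K t s ∂μ = lam * φ s) (n : ℕ) :
    ∫⁻ x : Fin (n + 1) → α, φ (x 0) * ((∏ i : Fin n, K (x i.castSucc) (x i.succ)) *
      g (x (Fin.last n))) ∂Measure.pi (fun _ => μ) = lam ^ n * ∫⁻ t, φ t * g t ∂μ := by
  have hmeas (n : ℕ) : Measurable fun x : Fin (n + 1) → α =>
      φ (x 0) * ((∏ i : Fin n, K (x i.castSucc) (x i.succ)) * g (x (Fin.last n))) := by fun_prop
  induction n with
  | zero =>
    simp only [Finset.univ_eq_empty, Finset.prod_empty, one_mul, pow_zero]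
    exact (measurePreserving_funUnique μ (Fin 1)).lintegral_comp (hφ.mul hg)
  | succ n ih =>
    have hcons := measurePreserving_finCons μ (n + 1)
    rw [← hcons.lintegral_comp (hmeas _), pow_succ', mul_assoc, ← ih,
      ← lintegral_const_mul _ (hmeas n)]
    refine (lintegral_prod_symm' _ ((hmeas _).comp hcons.measurable)).trans
      (lintegral_congr fun w => ?_)
    simp only [Function.comp_apply, Fin.prod_univ_succ, Fin.cons_zero, Fin.castSucc_zero,
      Fin.cons_succ, ← Fin.succ_castSucc, ← Fin.succ_last]
    rw [← mul_assoc, ← hlam, ← lintegral_mul_const _ (by fun_prop)]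
    exact lintegral_congr fun t => by ring

lemma lintegral_cycle_le (hK : Measurable (Function.uncurry K)) (hφ : Measurable φ)
    (hg : Measurable g) (hlam : ∀ s, ∫⁻ t, φ t * K t s ∂μ = lam * φ s)
    (hle : ∀ s t, K t s ≤ φ s * g t) (n : ℕ) :
    ∫⁻ x : Fin (n + 1) → α, ∏ i, K (x i) (x (i + 1)) ∂Measure.pi (fun _ => μ) ≤
      lam ^ n * ∫⁻ t, φ t * g t ∂μ := by
  rw [← lintegral_path hK hφ hg hlam]
  refine lintegral_mono fun x => ?_
  rw [prod_cycle_eq_mul_prod_path, mul_left_comm, mul_comm]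
  gcongr
  exact hle _ _

lemma le_lintegral_cycle (hK : Measurable (Function.uncurry K)) (hφ : Measurable φ)
    (hg : Measurable g) (hlam : ∀ s, ∫⁻ t, φ t * K t s ∂μ = lam * φ s)
    (hle : ∀ s t, φ s * g t ≤ K t s) (n : ℕ) :
    lam ^ n * ∫⁻ t, φ t * g t ∂μ ≤
      ∫⁻ x : Fin (n + 1) → α, ∏ i, K (x i) (x (i + 1)) ∂Measure.pi (fun _ => μ) := by
  rw [← lintegral_path hK hφ hg hlam]
  refine lintegral_mono fun x => ?_
  rw [prod_cycle_eq_mul_prod_path, mul_left_comm, mul_comm]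
  gcongr
  exact hle _ _

end TransferOperator

section SineEigenfunction

/-- The tent function `s ↦ min s (1 - s)` on `[0, 1]`, extended by `0`. -/
def tent (s : ℝ) : ENNReal := ENNReal.ofReal (min s (1 - s))

/-- The arch `s ↦ sin (π s)` on `[0, 1]`, extended by `0`: the Perron eigenfunction of the kernel
`min (tent s) (tent t)`. -/
def sineArch : ℝ → ENNReal :=
  (Set.Icc 0 1).indicator fun s => ENNReal.ofReal (Real.sin (Real.pi * s))

@[fun_prop]
lemma measurable_tent : Measurable tent := by
  unfold tent
  fun_prop

@[fun_prop]
lemma measurable_sineArch : Measurable sineArch :=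
  Measurable.indicator (by fun_prop) measurableSet_Icc

lemma tent_eq_zero {s : ℝ} (hs : s ∉ Set.Icc (0 : ℝ) 1) : tent s = 0 := by
  refine ENNReal.ofReal_of_nonpos ?_
  contrapose! hs
  rw [lt_min_iff] at hs
  exact ⟨by linarith, by linarith⟩

lemma tent_le_one (s : ℝ) : tent s ≤ 1 :=
  ENNReal.ofReal_le_one.2 (by rcases min_cases s (1 - s) with h | h <;> linarith)

lemma min_one_sub_mem_Icc {s : ℝ} (hs : s ∈ Set.Icc (0 : ℝ) 1) :
    min s (1 - s) ∈ Set.Icc (0 : ℝ) (1 / 2) :=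
  ⟨le_min hs.1 (sub_nonneg.2 hs.2), by rcases min_cases s (1 - s) with h | h <;> linarith⟩

lemma sin_pi_mul_nonneg {s : ℝ} (hs : s ∈ Set.Icc (0 : ℝ) 1) : 0 ≤ Real.sin (Real.pi * s) :=
  Real.sin_nonneg_of_nonneg_of_le_pi (mul_nonneg Real.pi_pos.le hs.1)
    (mul_le_of_le_one_right Real.pi_pos.le hs.2)

lemma sin_pi_mul_min_one_sub (s : ℝ) :
    Real.sin (Real.pi * min s (1 - s)) = Real.sin (Real.pi * s) := by
  rcases min_choice s (1 - s) with h | h <;> simp [h, mul_sub]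

lemma tent_le_sineArch (s : ℝ) : tent s ≤ sineArch s := by
  by_cases hs : s ∈ Set.Icc (0 : ℝ) 1
  · obtain ⟨h0, h1⟩ := min_one_sub_mem_Icc hs
    rw [sineArch, Set.indicator_of_mem hs, tent, ← sin_pi_mul_min_one_sub]
    refine ENNReal.ofReal_le_ofReal ?_
    have := Real.mul_le_sin (mul_nonneg Real.pi_pos.le h0) (by nlinarith [Real.pi_pos])
    rw [← mul_assoc, div_mul_cancel₀ _ Real.pi_ne_zero] at this
    linarith
  · simp [tent_eq_zero hs]

lemma sineArch_le_tent (s : ℝ) : sineArch s ≤ ENNReal.ofReal Real.pi * tent s := by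
  by_cases hs : s ∈ Set.Icc (0 : ℝ) 1
  · rw [sineArch, Set.indicator_of_mem hs, tent, ← ENNReal.ofReal_mul Real.pi_pos.le,
      ← sin_pi_mul_min_one_sub]
    exact ENNReal.ofReal_le_ofReal
      (Real.sin_le (mul_nonneg Real.pi_pos.le (min_one_sub_mem_Icc hs).1))
  · simp [sineArch, hs]

lemma lintegral_sineArch_mul_ofReal {f : ℝ → ℝ} (hf : Continuous f)
    (hf0 : ∀ t ∈ Set.Icc (0 : ℝ) 1, 0 ≤ f t) :
    ∫⁻ t, sineArch t * ENNReal.ofReal (f t) =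
      ENNReal.ofReal (∫ t in (0 : ℝ)..1, Real.sin (Real.pi * t) * f t) := by
  have hind (t : ℝ) : sineArch t * ENNReal.ofReal (f t) = (Set.Icc (0 : ℝ) 1).indicator
      (fun t => ENNReal.ofReal (Real.sin (Real.pi * t) * f t)) t := by
    by_cases ht : t ∈ Set.Icc (0 : ℝ) 1
    · simp [sineArch, ht, ENNReal.ofReal_mul (sin_pi_mul_nonneg ht)]
    · simp [sineArch, ht]
  rw [lintegral_congr hind, lintegral_indicator measurableSet_Icc,
    intervalIntegral.integral_of_le zero_le_one, ← integral_Icc_eq_integral_Ioc,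
    ofReal_integral_eq_lintegral_ofReal]
  · exact Continuous.integrableOn_Icc (by fun_prop)
  · filter_upwards [ae_restrict_mem measurableSet_Icc] with t ht
    exact mul_nonneg (sin_pi_mul_nonneg ht) (hf0 t ht)

lemma integral_sin_pi_mul (a b : ℝ) : ∫ t in a..b, Real.sin (Real.pi * t) =
    (Real.cos (Real.pi * a) - Real.cos (Real.pi * b)) / Real.pi := by
  rw [intervalIntegral.integral_comp_mul_left Real.sin Real.pi_ne_zero, integral_sin, smul_eq_mul,
    div_eq_inv_mul]

lemma integral_sin_pi_mul_sq :
    ∫ t in (0 : ℝ)..1, Real.sin (Real.pi * t) * Real.sin (Real.pi * t) = 1 / 2 := by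
  simp_rw [← sq]
  rw [intervalIntegral.integral_comp_mul_left (fun t => Real.sin t ^ 2) Real.pi_ne_zero,
    integral_sin_sq]
  simp [field]

lemma integral_sin_pi_mul_mul_id (u : ℝ) : ∫ t in (0 : ℝ)..u, Real.sin (Real.pi * t) * t =
    Real.sin (Real.pi * u) / Real.pi ^ 2 - u * Real.cos (Real.pi * u) / Real.pi := by
  have hderiv (t : ℝ) : HasDerivAt (fun t => Real.sin (Real.pi * t) / Real.pi ^ 2 -
      t * Real.cos (Real.pi * t) / Real.pi) (Real.sin (Real.pi * t) * t) t := by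
    have hpi := (hasDerivAt_id t).const_mul Real.pi
    refine ((hpi.sin.div_const (Real.pi ^ 2)).sub
      (((hasDerivAt_id t).mul hpi.cos).div_const Real.pi)).congr_deriv ?_
    simp [field]
  rw [intervalIntegral.integral_eq_sub_of_hasDerivAt (fun t _ => hderiv t)
    (Continuous.intervalIntegrable (by fun_prop) _ _)]
  simp

lemma integral_sin_pi_mul_mul_min {u : ℝ} (hu : u ∈ Set.Icc (0 : ℝ) (1 / 2)) :
    ∫ t in (0 : ℝ)..1 / 2, Real.sin (Real.pi * t) * min t u =
      Real.sin (Real.pi * u) / Real.pi ^ 2 := by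
  have hint (a b : ℝ) : IntervalIntegrable (fun t => Real.sin (Real.pi * t) * min t u) volume a b :=
    Continuous.intervalIntegrable (by fun_prop) _ _
  have hleft : ∫ t in (0 : ℝ)..u, Real.sin (Real.pi * t) * min t u =
      ∫ t in (0 : ℝ)..u, Real.sin (Real.pi * t) * t := by
    refine intervalIntegral.integral_congr fun t ht => ?_
    rw [Set.uIcc_of_le hu.1] at ht
    simp only [min_eq_left ht.2]
  have hright : ∫ t in u..1 / 2, Real.sin (Real.pi * t) * min t u =
      ∫ t in u..1 / 2, Real.sin (Real.pi * t) * u := by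
    refine intervalIntegral.integral_congr fun t ht => ?_
    rw [Set.uIcc_of_le hu.2] at ht
    simp only [min_eq_right ht.1]
  rw [← intervalIntegral.integral_add_adjacent_intervals (hint 0 u) (hint u _), hleft, hright,
    integral_sin_pi_mul_mul_id, intervalIntegral.integral_mul_const, integral_sin_pi_mul,
    mul_one_div, Real.cos_pi_div_two]
  ring

lemma integral_sin_pi_mul_mul_min_tent {u : ℝ} (hu : u ∈ Set.Icc (0 : ℝ) (1 / 2)) :
    ∫ t in (0 : ℝ)..1, Real.sin (Real.pi * t) * min (min t (1 - t)) u =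
      2 / Real.pi ^ 2 * Real.sin (Real.pi * u) := by
  set f : ℝ → ℝ := fun t => Real.sin (Real.pi * t) * min (min t (1 - t)) u with hf
  have hint (a b : ℝ) : IntervalIntegrable f volume a b :=
    Continuous.intervalIntegrable (by fun_prop) _ _
  have hsymm (t : ℝ) : f (1 - t) = f t := by
    simp [hf, mul_sub, min_comm]
  have hleft : ∫ t in (0 : ℝ)..1 / 2, f t = Real.sin (Real.pi * u) / Real.pi ^ 2 := by
    rw [← integral_sin_pi_mul_mul_min hu]
    refine intervalIntegral.integral_congr fun t ht => ?_
    rw [Set.uIcc_of_le (by norm_num)] at ht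
    simp only [hf, min_eq_left (show t ≤ 1 - t by linarith [ht.2])]
  have hright : ∫ t in (1 / 2 : ℝ)..1, f t = ∫ t in (0 : ℝ)..1 / 2, f t := by
    have := intervalIntegral.integral_comp_sub_left f (a := 0) (b := 1 / 2) 1
    simp only [hsymm] at this
    rw [this]
    norm_num
  rw [← intervalIntegral.integral_add_adjacent_intervals (hint 0 (1 / 2)) (hint _ _), hright, hleft]
  ring

lemma lintegral_sineArch_mul_min_tent (s : ℝ) :
    ∫⁻ t, sineArch t * min (tent t) (tent s) =
      ENNReal.ofReal (2 / Real.pi ^ 2) * sineArch s := by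
  by_cases hs : s ∈ Set.Icc (0 : ℝ) 1
  · have hu := min_one_sub_mem_Icc hs
    simp only [tent, ← ENNReal.ofReal_min]
    rw [lintegral_sineArch_mul_ofReal (by fun_prop)
      fun t ht => le_min (min_one_sub_mem_Icc ht).1 hu.1, integral_sin_pi_mul_mul_min_tent hu,
      sin_pi_mul_min_one_sub, sineArch, Set.indicator_of_mem hs, ENNReal.ofReal_mul (by positivity)]
  · simp [tent_eq_zero hs, sineArch, hs]

lemma lintegral_sineArch : ∫⁻ t, sineArch t = ENNReal.ofReal (2 / Real.pi) := by
  have h := lintegral_sineArch_mul_ofReal (f := fun _ => 1) continuous_const fun _ _ => zero_le_one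
  simp only [ENNReal.ofReal_one, mul_one, integral_sin_pi_mul] at h
  rw [h]
  norm_num

lemma lintegral_sineArch_sq : ∫⁻ t, sineArch t * sineArch t = ENNReal.ofReal (1 / 2) := by
  rw [← integral_sin_pi_mul_sq,
    ← lintegral_sineArch_mul_ofReal (by fun_prop) fun t ht => sin_pi_mul_nonneg ht]
  refine lintegral_congr fun t => ?_
  by_cases ht : t ∈ Set.Icc (0 : ℝ) 1 <;> simp [sineArch, ht]

lemma measurable_min_tent : Measurable (Function.uncurry fun s t => min (tent s) (tent t)) := by
  unfold Function.uncurry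
  fun_prop

lemma lintegral_cycle_min_tent_le (n : ℕ) :
    ∫⁻ x : Fin (n + 1) → ℝ, ∏ i, min (tent (x i)) (tent (x (i + 1))) ≤
      ENNReal.ofReal (Real.pi * (2 / Real.pi ^ 2) ^ (n + 1)) := by
  refine (lintegral_cycle_le (g := 1) measurable_min_tent measurable_sineArch measurable_one
    lintegral_sineArch_mul_min_tent (fun s t => ?_) n).trans_eq ?_
  · simpa using (min_le_right _ _).trans (tent_le_sineArch s)
  · simp only [Pi.one_apply, mul_one, lintegral_sineArch]
    rw [← ENNReal.ofReal_pow (by positivity), ← ENNReal.ofReal_mul (by positivity)]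
    congr 1
    rw [pow_succ _ n]
    field_simp

lemma le_lintegral_cycle_min_tent (n : ℕ) :
    ENNReal.ofReal (1 / 4 * (2 / Real.pi ^ 2) ^ (n + 1)) ≤
      ∫⁻ x : Fin (n + 1) → ℝ, ∏ i, min (tent (x i)) (tent (x (i + 1))) := by
  have hpi : ENNReal.ofReal (1 / Real.pi ^ 2) * (ENNReal.ofReal Real.pi * ENNReal.ofReal Real.pi) =
      1 := by
    rw [← ENNReal.ofReal_mul Real.pi_pos.le, ← ENNReal.ofReal_mul (by positivity)]
    simp [← sq, Real.pi_ne_zero]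
  refine le_of_eq_of_le ?_ (le_lintegral_cycle
    (g := fun t => ENNReal.ofReal (1 / Real.pi ^ 2) * sineArch t) measurable_min_tent
    measurable_sineArch (by fun_prop) lintegral_sineArch_mul_min_tent (fun s t => ?_) n)
  · simp only [mul_left_comm (sineArch _)]
    rw [lintegral_const_mul _ (by fun_prop), lintegral_sineArch_sq,
      ← ENNReal.ofReal_pow (by positivity), ← ENNReal.ofReal_mul (by positivity),
      ← ENNReal.ofReal_mul (by positivity)]
    congr 1
    rw [pow_succ _ n]
    field_simp
    norm_num
  · calc sineArch s * (ENNReal.ofReal (1 / Real.pi ^ 2) * sineArch t)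
      _ ≤ ENNReal.ofReal Real.pi * tent s *
          (ENNReal.ofReal (1 / Real.pi ^ 2) * (ENNReal.ofReal Real.pi * tent t)) := by
        gcongr <;> exact sineArch_le_tent _
      _ = ENNReal.ofReal (1 / Real.pi ^ 2) * (ENNReal.ofReal Real.pi * ENNReal.ofReal Real.pi) *
          (tent t * tent s) := by ring
      _ = tent t * tent s := by rw [hpi, one_mul]
      _ ≤ min (tent t) (tent s) :=
        le_min (mul_le_of_le_one_right' (tent_le_one s)) (mul_le_of_le_one_left' (tent_le_one t))

end SineEigenfunction

section Correlation

/-- `c` is an admissible correlation `E[s t]` of two `±1`-valued random variables `s` and `t` with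
means `u` and `v`. The two values of `ε` give the four facets of `P` of a single edge in
`±1`-coordinates. -/
def IsCorrelation (u v c : ℝ) : Prop :=
  ∀ ε : ℤˣ, |u - ε * v| ≤ 1 - ε * c

namespace IsCorrelation

variable {u v w a b c : ℝ}

lemma symm (h : IsCorrelation u v c) : IsCorrelation v u c := by
  intro ε
  have := h ε
  rcases Int.units_eq_one_or ε with rfl | rfl <;> simp_all [abs_sub_comm, add_comm]

lemma abs_corr_le_one (h : IsCorrelation u v c) : |c| ≤ 1 := by
  have h₁ := (abs_nonneg _).trans (h 1)
  have h₂ := (abs_nonneg _).trans (h (-1))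
  push_cast at h₁ h₂
  exact abs_le.2 ⟨by linarith, by linarith⟩

/-- The four quantities are `4 P(s = σ, t = τ)`. -/
lemma joint_nonneg (h : IsCorrelation u v c) (σ τ : ℤˣ) : 0 ≤ 1 + σ * u + τ * v + σ * τ * c := by
  have h₁ := abs_le.1 (h 1)
  have h₂ := abs_le.1 (h (-1))
  push_cast at h₁ h₂
  rcases Int.units_eq_one_or σ with rfl | rfl <;> rcases Int.units_eq_one_or τ with rfl | rfl <;>
    push_cast <;> linarith

lemma abs_left_le_one (h : IsCorrelation u v c) : |u| ≤ 1 := by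
  have h₁ := abs_le.1 (h 1)
  have h₂ := abs_le.1 (h (-1))
  push_cast at h₁ h₂
  exact abs_le.2 ⟨by linarith, by linarith⟩

lemma abs_sub_mul_mul_le (huv : IsCorrelation u v a) (hvw : IsCorrelation v w b) (σ τ : ℤˣ) :
    |u - (σ * τ : ℤˣ) * w| ≤ (1 - σ * a) + (1 - τ * b) := by
  calc |u - (σ * τ : ℤˣ) * w| = |(u - σ * v) + σ * (v - τ * w)| := by push_cast; ring_nf
    _ ≤ |u - σ * v| + |σ * (v - τ * w)| := abs_add_le _ _
    _ = |u - σ * v| + |v - τ * w| := by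
      rcases Int.units_eq_one_or σ with rfl | rfl <;> simp [abs_sub_comm]
    _ ≤ _ := add_le_add (huv σ) (hvw τ)

end IsCorrelation

lemma abs_sub_prod_mul_le_sum {u w : ℕ → ℝ} {ε : ℕ → ℤˣ} {k : ℕ}
    (h : ∀ i < k, |u i - ε i * u (i + 1)| ≤ w i) :
    |u 0 - (∏ i ∈ Finset.range k, ε i : ℤˣ) * u k| ≤ ∑ i ∈ Finset.range k, w i := by
  induction k with
  | zero => simp
  | succ k ih =>
    rw [Finset.prod_range_succ, Finset.sum_range_succ]
    set π := ∏ i ∈ Finset.range k, ε i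
    calc |u 0 - (π * ε k : ℤˣ) * u (k + 1)|
      _ = |(u 0 - π * u k) + π * (u k - ε k * u (k + 1))| := by push_cast; ring_nf
      _ ≤ |u 0 - π * u k| + |π * (u k - ε k * u (k + 1))| := abs_add_le _ _
      _ = |u 0 - π * u k| + |u k - ε k * u (k + 1)| := by
        rcases Int.units_eq_one_or π with h | h <;> simp [h, abs_sub_comm]
      _ ≤ _ := add_le_add (ih fun i hi => h i (hi.trans k.lt_succ_self)) (h k k.lt_succ_self)

lemma units_int_ne_neg_self (σ : ℤˣ) : σ ≠ -σ :=
  Int.units_ne_iff_eq_neg.2 (neg_neg σ).symm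

lemma one_sub_units_mul_nonneg {c : ℝ} (hc : |c| ≤ 1) (σ : ℤˣ) : 0 ≤ 1 - σ * c := by
  have := abs_le.1 hc
  rcases Int.units_eq_one_or σ with rfl | rfl <;> push_cast <;> linarith

lemma two_le_sum_add_sum_of_prod_eq_neg_prod {ι : Type*} {s : Finset ι} {c : ι → ℝ}
    (hc : ∀ i ∈ s, |c i| ≤ 1) {σ τ : ι → ℤˣ} (h : ∏ i ∈ s, σ i = -∏ i ∈ s, τ i) :
    2 ≤ ∑ i ∈ s, (1 - σ i * c i) + ∑ i ∈ s, (1 - τ i * c i) := by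
  obtain ⟨j, hj, hne⟩ : ∃ j ∈ s, σ j ≠ τ j := by
    by_contra! heq
    exact units_int_ne_neg_self _ ((Finset.prod_congr rfl heq).symm.trans h)
  rw [Int.units_ne_iff_eq_neg] at hne
  calc (2 : ℝ) = (1 - σ j * c j) + (1 - τ j * c j) := by rw [hne]; push_cast; ring
    _ ≤ ∑ i ∈ s, ((1 - σ i * c i) + (1 - τ i * c i)) :=
      Finset.single_le_sum (f := fun i => (1 - σ i * c i) + (1 - τ i * c i))
        (fun i hi => add_nonneg (one_sub_units_mul_nonneg (hc i hi) _)
          (one_sub_units_mul_nonneg (hc i hi) _)) hj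
    _ = _ := Finset.sum_add_distrib

lemma exists_isCorrelation_forall_le {u v : ℝ} (hu : |u| ≤ 1) (hv : |v| ≤ 1) {W : ℤˣ → Set ℝ}
    (hW : ∀ δ, ∀ S ∈ W δ, |u - δ * v| ≤ S) (hWW : ∀ S ∈ W 1, ∀ S' ∈ W (-1), 2 ≤ S + S') :
    ∃ c, IsCorrelation u v c ∧ ∀ δ, ∀ S ∈ W δ, 1 - δ * c ≤ S := by
  have hW₁ := hW 1
  have hW₂ := hW (-1)
  push_cast at hW₁ hW₂
  obtain ⟨c, hlower, hupper⟩ := exists_between_of_forall_le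
    (s := insert (|u + v| - 1) ((1 - ·) '' W 1)) (t := insert (1 - |u - v|) ((· - 1) '' W (-1)))
    (Set.insert_nonempty _ _) (Set.insert_nonempty _ _) (by
      rintro _ (rfl | ⟨S, hS, rfl⟩) _ (rfl | ⟨S', hS', rfl⟩)
      · have := abs_le.1 hu
        have := abs_le.1 hv
        rcases abs_cases (u + v) with h | h <;> rcases abs_cases (u - v) with h' | h' <;> linarith
      · simpa using hW₂ S' hS'
      · have := hW₁ S hS
        rw [one_mul] at this
        linarith
      · linarith [hWW S hS S' hS'])
  rw [upperBounds_insert, Set.mem_inter_iff, Set.mem_Ici] at hlower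
  rw [lowerBounds_insert, Set.mem_inter_iff, Set.mem_Iic] at hupper
  refine ⟨c, fun ε => ?_, fun δ => ?_⟩
  · rcases Int.units_eq_one_or ε with rfl | rfl <;> push_cast
    · rw [one_mul, one_mul]
      linarith [hupper.1]
    · rw [neg_one_mul, neg_one_mul, sub_neg_eq_add, sub_neg_eq_add]
      linarith [hlower.1]
  · rcases Int.units_eq_one_or δ with rfl | rfl <;> intro S hS <;> push_cast
    · linarith [hlower.2 (Set.mem_image_of_mem _ hS)]
    · linarith [hupper.2 (Set.mem_image_of_mem _ hS)]

lemma exists_forall_abs_sub_le {ι : Type*} [Nonempty ι] {a r : ι → ℝ}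
    (h : ∀ i j, |a i - a j| ≤ r i + r j) : ∃ x, ∀ i, |x - a i| ≤ r i := by
  obtain ⟨x, hlower, hupper⟩ := exists_between_of_forall_le
    (Set.range_nonempty fun i => a i - r i) (Set.range_nonempty fun i => a i + r i) (by
      rintro _ ⟨i, rfl⟩ _ ⟨j, rfl⟩
      linarith [(abs_le.1 (h i j)).2])
  refine ⟨x, fun i => abs_le.2 ⟨?_, ?_⟩⟩
  · linarith [hlower ⟨i, rfl⟩]
  · linarith [hupper ⟨i, rfl⟩]

lemma exists_abs_le_one_eq_mul {x r : ℝ} (h : |x| ≤ r) : ∃ ρ, |ρ| ≤ 1 ∧ x = ρ * r := by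
  rcases ((abs_nonneg x).trans h).eq_or_lt with rfl | hr
  · exact ⟨0, by simp, by simpa using h⟩
  · exact ⟨x / r, by rwa [abs_div, abs_of_pos hr, div_le_one hr], by field_simp⟩

/-- `κ` is the third moment `E[r s t]` of a triple of `±1` variables with the given first and second
moments. It exists because an interval-Helly argument only has to compare pairs of constraints, and
these are the edge and triangle inequalities. -/
lemma exists_third_moment {u v w a b c : ℝ} (huv : IsCorrelation u v c)
    (huw : IsCorrelation u w a) (hvw : IsCorrelation v w b)
    (htri : ∀ σ τ : ℤˣ, 1 - σ * τ * c ≤ (1 - σ * a) + (1 - τ * b)) :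
    ∃ κ : ℝ, ∀ σ τ : ℤˣ,
      |w + σ * a + τ * b + σ * τ * κ| ≤ 1 + σ * u + τ * v + σ * τ * c := by
  obtain ⟨κ, hκ⟩ := exists_forall_abs_sub_le
    (a := fun i : ℤˣ × ℤˣ => -(i.1 * i.2 * w + i.2 * a + i.1 * b : ℝ))
    (r := fun i => 1 + i.1 * u + i.2 * v + i.1 * i.2 * c) (by
      have htri₁₁ := htri 1 1
      have htri₁₂ := htri 1 (-1)
      have htri₂₁ := htri (-1) 1
      have htri₂₂ := htri (-1) (-1)
      rintro ⟨σ, τ⟩ ⟨σ', τ'⟩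
      have huw₁ := huw.joint_nonneg σ 1
      have huw₂ := huw.joint_nonneg σ (-1)
      have hvw₁ := hvw.joint_nonneg τ 1
      have hvw₂ := hvw.joint_nonneg τ (-1)
      have huv₁ := huv.joint_nonneg σ τ
      push_cast at *
      have hcases (σ σ' : ℤˣ) : σ = σ' ∨ -σ = σ' := by
        rw [neg_eq_iff_eq_neg, ← Int.units_ne_iff_eq_neg]
        exact eq_or_ne _ _
      rw [abs_le]
      rcases hcases σ σ' with rfl | rfl <;> rcases hcases τ τ' with rfl | rfl <;>
        rcases Int.units_eq_one_or σ with rfl | rfl <;>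
        rcases Int.units_eq_one_or τ with rfl | rfl <;> push_cast at * <;> constructor <;> linarith)
  refine ⟨κ, fun σ τ => ?_⟩
  have h := abs_le.1 (hκ (σ, τ))
  rw [abs_le]
  rcases Int.units_eq_one_or σ with rfl | rfl <;> rcases Int.units_eq_one_or τ with rfl | rfl <;>
    push_cast at * <;> constructor <;> linarith

lemma exists_conditional_mean {u v w a b c : ℝ} (huv : IsCorrelation u v c)
    (huw : IsCorrelation u w a) (hvw : IsCorrelation v w b)
    (htri : ∀ σ τ : ℤˣ, 1 - σ * τ * c ≤ (1 - σ * a) + (1 - τ * b)) :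
    ∃ α β γ δ : ℝ,
    (∀ σ τ : ℤˣ, |α + β * σ + γ * τ + δ * (σ * τ)| ≤ 1) ∧
      w = α + β * u + γ * v + δ * c ∧ a = α * u + β + γ * c + δ * v ∧
      b = α * v + β * c + γ + δ * u := by
  obtain ⟨κ, hκ⟩ := exists_third_moment huv huw hvw htri
  choose ρ hρ hρr using fun σ τ : ℤˣ => exists_abs_le_one_eq_mul (hκ σ τ)
  refine ⟨(ρ 1 1 + ρ 1 (-1) + ρ (-1) 1 + ρ (-1) (-1)) / 4,
    (ρ 1 1 + ρ 1 (-1) - ρ (-1) 1 - ρ (-1) (-1)) / 4,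
    (ρ 1 1 - ρ 1 (-1) + ρ (-1) 1 - ρ (-1) (-1)) / 4,
    (ρ 1 1 - ρ 1 (-1) - ρ (-1) 1 + ρ (-1) (-1)) / 4, fun σ τ => ?_, ?_⟩
  · convert hρ σ τ using 2
    rcases Int.units_eq_one_or σ with rfl | rfl <;> rcases Int.units_eq_one_or τ with rfl | rfl <;>
      push_cast <;> ring
  · have h₁ := hρr 1 1
    have h₂ := hρr 1 (-1)
    have h₃ := hρr (-1) 1
    have h₄ := hρr (-1) (-1)
    push_cast at h₁ h₂ h₃ h₄
    refine ⟨?_, ?_, ?_⟩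
    · linarith
    · linarith
    · linarith

end Correlation

section PathPolytope

lemma map_mem_convexHull {E F : Type*} [AddCommGroup E] [Module ℝ E] [AddCommGroup F] [Module ℝ F]
    {f : E → F} (hf : ∀ x y (a b : ℝ), a + b = 1 → f (a • x + b • y) = a • f x + b • f y)
    {s : Set E} {t : Set F} (hst : ∀ x ∈ s, f x ∈ convexHull ℝ t) {x : E}
    (hx : x ∈ convexHull ℝ s) : f x ∈ convexHull ℝ t := by
  refine convexHull_min (t := f ⁻¹' convexHull ℝ t) hst (fun x hx y hy a b ha hb hab => ?_) hx
  rw [Set.mem_preimage, hf x y a b hab]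
  exact convex_convexHull ℝ t hx hy ha hb hab

lemma mem_convexHull_of_abs_le_one {E : Type*} [AddCommGroup E] [Module ℝ E] {s : Set E} {x y z : E}
    {t : ℝ} (ht : |t| ≤ 1) (hx : x ∈ s) (hy : y ∈ s)
    (hz : z = ((1 + t) / 2) • x + ((1 - t) / 2) • y) : z ∈ convexHull ℝ s := by
  obtain ⟨h₁, h₂⟩ := abs_le.1 ht
  rw [hz]
  exact convex_convexHull ℝ s (subset_convexHull ℝ s hx) (subset_convexHull ℝ s hy)
    (by linarith) (by linarith) (by ring)

/-- The points `(s, c, C)` in which `s` is a `±1`-vector on the path `0, …, k`, the `c i` are the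
products along its edges and `C` is the product of the two ends. The coordinates of `s` beyond `k`
and of `c` beyond `k - 1` are unconstrained. -/
def pathChordSpins (k : ℕ) : Set ((ℕ → ℝ) × (ℕ → ℝ) × ℝ) :=
  {p | (∀ i ≤ k, p.1 i = 1 ∨ p.1 i = -1) ∧ (∀ i < k, p.2.1 i = p.1 i * p.1 (i + 1)) ∧
    p.2.2 = p.1 0 * p.1 k}

/-- The data of `p` on the path `0, …, k`, extended by a spin `t` at `k + 1`. -/
def extendPath (k : ℕ) (p : (ℕ → ℝ) × (ℕ → ℝ) × ℝ) (t : ℝ) : (ℕ → ℝ) × (ℕ → ℝ) × ℝ :=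
  (Function.update p.1 (k + 1) t, Function.update p.2.1 k (p.1 k * t), p.1 0 * t)

lemma extendPath_mem_pathChordSpins {k : ℕ} {p : (ℕ → ℝ) × (ℕ → ℝ) × ℝ} (hp : p ∈ pathChordSpins k)
    {t : ℝ} (ht : t = 1 ∨ t = -1) : extendPath k p t ∈ pathChordSpins (k + 1) := by
  obtain ⟨hs, hc, -⟩ := hp
  refine ⟨fun i hi => ?_, fun i hi => ?_, by simp [extendPath]⟩
  · rcases hi.eq_or_lt with rfl | hi
    · simpa [extendPath] using ht
    · simpa [extendPath, hi.ne] using hs i (Nat.lt_succ_iff.1 hi)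
  · rcases (Nat.lt_succ_iff.1 hi).eq_or_lt with rfl | hi
    · simp [extendPath]
    · simpa [extendPath, hi.ne, (Nat.lt_succ_of_lt hi).ne] using hc i hi

lemma extendPath_mem_convexHull {k : ℕ} {p : (ℕ → ℝ) × (ℕ → ℝ) × ℝ} (hp : p ∈ pathChordSpins k)
    {t : ℝ} (ht : |t| ≤ 1) : extendPath k p t ∈ convexHull ℝ (pathChordSpins (k + 1)) := by
  refine mem_convexHull_of_abs_le_one ht (extendPath_mem_pathChordSpins hp (.inl rfl))
    (extendPath_mem_pathChordSpins hp (.inr rfl)) ?_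
  simp only [extendPath, Prod.smul_mk, Prod.mk_add_mk]
  ext i
  · simp only [Pi.add_apply, Pi.smul_apply, smul_eq_mul, Function.update_apply]
    split_ifs <;> ring
  · simp only [Pi.add_apply, Pi.smul_apply, smul_eq_mul, Function.update_apply]
    split_ifs <;> ring
  · simp only [smul_eq_mul]
    ring

lemma exists_eq_units_int_of_eq_one_or_eq_neg_one {s : ℝ} (hs : s = 1 ∨ s = -1) :
    ∃ σ : ℤˣ, s = σ := by
  rcases hs with rfl | rfl
  · exact ⟨1, by simp⟩
  · exact ⟨-1, by simp⟩

/-- The conditional mean of the spin at `k + 1`, given the spins `σ` at `0` and `τ` at `k`, is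
`α + β σ + γ τ + δ σ τ`. -/
lemma glue_triangle_mem_convexHull {k : ℕ} {u c : ℕ → ℝ} {C α β γ δ : ℝ}
    (hmean : ∀ σ τ : ℤˣ, |α + β * σ + γ * τ + δ * (σ * τ)| ≤ 1)
    (h : (u, c, C) ∈ convexHull ℝ (pathChordSpins k)) :
    (Function.update u (k + 1) (α + β * u 0 + γ * u k + δ * C),
      Function.update c k (α * u k + β * C + γ + δ * u 0),
      α * u 0 + β + γ * C + δ * u k) ∈ convexHull ℝ (pathChordSpins (k + 1)) := by
  refine map_mem_convexHull (f := fun p : (ℕ → ℝ) × (ℕ → ℝ) × ℝ =>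
    (Function.update p.1 (k + 1) (α + β * p.1 0 + γ * p.1 k + δ * p.2.2),
      Function.update p.2.1 k (α * p.1 k + β * p.2.2 + γ + δ * p.1 0),
      α * p.1 0 + β + γ * p.2.2 + δ * p.1 k)) (fun p q a b hab => ?_) (fun p hp => ?_) h
  · obtain rfl : b = 1 - a := by linarith
    simp only [Prod.fst_add, Prod.snd_add, Prod.smul_fst, Prod.smul_snd, Pi.add_apply,
      Pi.smul_apply, smul_eq_mul, Prod.smul_mk, Prod.mk_add_mk]
    ext i
    · simp only [Pi.add_apply, Pi.smul_apply, smul_eq_mul, Function.update_apply]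
      split_ifs <;> ring
    · simp only [Pi.add_apply, Pi.smul_apply, smul_eq_mul, Function.update_apply]
      split_ifs <;> ring
    · ring
  · obtain ⟨σ, hσ⟩ := exists_eq_units_int_of_eq_one_or_eq_neg_one (hp.1 0 (Nat.zero_le k))
    obtain ⟨τ, hτ⟩ := exists_eq_units_int_of_eq_one_or_eq_neg_one (hp.1 k le_rfl)
    convert extendPath_mem_convexHull hp (hmean σ τ) using 1
    simp only [extendPath, hp.2.2, hσ, hτ]
    rcases Int.units_eq_one_or σ with rfl | rfl <;> rcases Int.units_eq_one_or τ with rfl | rfl <;>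
      push_cast <;> ring_nf

lemma two_le_sum_path_add_detour {k : ℕ} {c : ℕ → ℝ} {C : ℝ}
    (hodd : ∀ ε : ℕ → ℤˣ, 1 - (∏ i ∈ Finset.range (k + 1), ε i : ℤˣ) * C ≤
      ∑ i ∈ Finset.range (k + 1), (1 - ε i * c i))
    {ε : ℕ → ℤˣ} {σ τ : ℤˣ} (h : σ * τ = -∏ i ∈ Finset.range k, ε i) :
    2 ≤ ∑ i ∈ Finset.range k, (1 - ε i * c i) + ((1 - σ * C) + (1 - τ * c k)) := by
  have hweight := hodd (Function.update ε k τ)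
  have hne : ∀ i ∈ Finset.range k, i ≠ k := fun i hi => (Finset.mem_range.1 hi).ne
  have hprod : (∏ i ∈ Finset.range k, ε i) * τ = -σ := by
    rw [← neg_eq_iff_eq_neg.2 h, neg_mul, mul_assoc, Int.units_mul_self, mul_one]
  rw [Finset.prod_range_succ, Finset.sum_range_succ, Function.update_self,
    Finset.prod_update_of_notMem Finset.notMem_range_self, hprod,
    Finset.sum_congr rfl fun i hi => by rw [Function.update_of_ne (hne i hi)]] at hweight
  push_cast at hweight
  linarith

/-- The admissible correlations of the chord `{0, k}` form an interval, whose ends are compared with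
the bounds coming from the path `0, …, k` and from the detour over `k + 1`. -/
lemma exists_chord {k : ℕ} {u c : ℕ → ℝ} {C : ℝ}
    (hedge : ∀ i < k + 1, IsCorrelation (u i) (u (i + 1)) (c i))
    (hchord : IsCorrelation (u 0) (u (k + 1)) C)
    (hodd : ∀ ε : ℕ → ℤˣ, 1 - (∏ i ∈ Finset.range (k + 1), ε i : ℤˣ) * C ≤
      ∑ i ∈ Finset.range (k + 1), (1 - ε i * c i)) :
    ∃ D, IsCorrelation (u 0) (u k) D ∧
      (∀ ε : ℕ → ℤˣ, 1 - (∏ i ∈ Finset.range k, ε i : ℤˣ) * D ≤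
        ∑ i ∈ Finset.range k, (1 - ε i * c i)) ∧
      ∀ σ τ : ℤˣ, 1 - σ * τ * D ≤ (1 - σ * C) + (1 - τ * c k) := by
  have hedge' (i : ℕ) (hi : i ∈ Finset.range k) : IsCorrelation (u i) (u (i + 1)) (c i) :=
    hedge i ((Finset.mem_range.1 hi).trans k.lt_succ_self)
  have hlast := hedge k k.lt_succ_self
  let pathWeights (δ : ℤˣ) : Set ℝ := {S | ∃ ε : ℕ → ℤˣ, ∏ i ∈ Finset.range k, ε i = δ ∧
    ∑ i ∈ Finset.range k, (1 - ε i * c i) = S}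
  let detourWeights (δ : ℤˣ) : Set ℝ := {S | ∃ σ τ : ℤˣ, σ * τ = δ ∧
    (1 - σ * C) + (1 - τ * c k) = S}
  obtain ⟨D, hD, hW⟩ := exists_isCorrelation_forall_le (u := u 0) (v := u k)
    (W := fun δ => pathWeights δ ∪ detourWeights δ) hchord.abs_left_le_one hlast.abs_left_le_one
    (by
      rintro _ _ (⟨ε, rfl, rfl⟩ | ⟨σ, τ, rfl, rfl⟩)
      · exact abs_sub_prod_mul_le_sum fun i hi => hedge' i (Finset.mem_range.2 hi) (ε i)
      · exact hchord.abs_sub_mul_mul_le hlast.symm σ τ)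
    (by
      rintro _ (⟨ε, hε, rfl⟩ | ⟨σ, τ, hστ, rfl⟩) _ (⟨ε', hε', rfl⟩ | ⟨σ', τ', hστ', rfl⟩)
      · exact two_le_sum_add_sum_of_prod_eq_neg_prod (fun i hi => (hedge' i hi).abs_corr_le_one)
          (by rw [hε, hε', neg_neg])
      · exact two_le_sum_path_add_detour hodd (by rw [hε, hστ'])
      · rw [add_comm]
        exact two_le_sum_path_add_detour hodd (by rw [hε', hστ, neg_neg])
      · simpa only [Fin.sum_univ_two, Matrix.cons_val_zero, Matrix.cons_val_one] using
          two_le_sum_add_sum_of_prod_eq_neg_prod (s := .univ) (c := ![C, c k])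
          (σ := ![σ, τ]) (τ := ![σ', τ'])
          (by simp [Fin.forall_fin_two, hchord.abs_corr_le_one, hlast.abs_corr_le_one])
          (by simp [hστ, hστ']))
  exact ⟨D, hD, fun ε => hW _ _ (.inl ⟨ε, rfl, rfl⟩), fun σ τ => by
    simpa using hW _ _ (.inr ⟨σ, τ, rfl, rfl⟩)⟩

lemma mem_convexHull_pathChordSpins {k : ℕ} {u c : ℕ → ℝ} {C : ℝ}
    (hedge : ∀ i < k, IsCorrelation (u i) (u (i + 1)) (c i))
    (hchord : IsCorrelation (u 0) (u k) C)
    (hodd : ∀ ε : ℕ → ℤˣ, 1 - (∏ i ∈ Finset.range k, ε i : ℤˣ) * C ≤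
      ∑ i ∈ Finset.range k, (1 - ε i * c i)) :
    (u, c, C) ∈ convexHull ℝ (pathChordSpins k) := by
  induction k generalizing C with
  | zero =>
    have hC : C = 1 := by
      have hle := (abs_le.1 hchord.abs_corr_le_one).2
      have hge : 1 - C ≤ 0 := by simpa using hodd 1
      linarith
    refine mem_convexHull_of_abs_le_one hchord.abs_left_le_one
      (x := (Function.update u 0 1, c, 1)) (y := (Function.update u 0 (-1), c, 1))
      (by simp [pathChordSpins]) (by simp [pathChordSpins]) ?_
    simp only [hC, Prod.smul_mk, Prod.mk_add_mk]
    ext i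
    · simp only [Pi.add_apply, Pi.smul_apply, smul_eq_mul, Function.update_apply]
      split_ifs with hi
      · rw [hi]
        ring
      · ring
    · simp only [Pi.add_apply, Pi.smul_apply, smul_eq_mul]
      ring
    · simp only [smul_eq_mul]
      ring
  | succ k ih =>
    obtain ⟨D, hD, hpath, htri⟩ := exists_chord hedge hchord hodd
    have hk := hedge k k.lt_succ_self
    obtain ⟨α, β, γ, δ, hmean, hu, hC, hc⟩ := exists_conditional_mean hD hchord hk htri
    have := glue_triangle_mem_convexHull hmean
      (ih (fun i hi => hedge i (hi.trans k.lt_succ_self)) hD hpath)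
    rwa [← hu, ← hC, ← hc, Function.update_eq_self, Function.update_eq_self] at this

end PathPolytope

section CyclePolytope

variable {n : ℕ}

/-- The relaxation `Q(C_m)` for `m = n + 1`, the coordinate of the edge `{i, i + 1}` being indexed
by `i`. -/
def cycleRelaxation (n : ℕ) : Set ((Fin (n + 1) → ℝ) × (Fin (n + 1) → ℝ)) :=
  {p | ∀ i, 0 ≤ p.2 i ∧ p.2 i ≤ p.1 i ∧ p.2 i ≤ p.1 (i + 1) ∧ p.1 i + p.1 (i + 1) ≤ 1 + p.2 i}

/-- The vertices of `P(C_m)` for `m = n + 1`, in the coordinates of `cycleRelaxation`. -/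
def cycleVertices (n : ℕ) : Set ((Fin (n + 1) → ℝ) × (Fin (n + 1) → ℝ)) :=
  {p | (∀ i, p.1 i = 0 ∨ p.1 i = 1) ∧ ∀ i, p.2 i = p.1 i * p.1 (i + 1)}

/-- The vertex coordinate rescaled from `{0, 1}` to `{-1, 1}`. -/
def spin (p : (Fin (n + 1) → ℝ) × (Fin (n + 1) → ℝ)) (i : Fin (n + 1)) : ℝ :=
  2 * p.1 i - 1

/-- The affine function of `p` that equals `spin p i * spin p (i + 1)` on `cycleVertices`. -/
def corr (p : (Fin (n + 1) → ℝ) × (Fin (n + 1) → ℝ)) (i : Fin (n + 1)) : ℝ :=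
  1 - 2 * p.1 i - 2 * p.1 (i + 1) + 4 * p.2 i

/-- The part of `Q(C_m)` cut off by the odd-cycle inequality with signs `ε`, where `∏ ε = -1`. Of
the two edge constraints of each edge, only the one with sign `ε i` is kept, as it implies the
other. -/
def cycleCorner (ε : Fin (n + 1) → ℤˣ) : Set ((Fin (n + 1) → ℝ) × (Fin (n + 1) → ℝ)) :=
  {p | (∀ i, |spin p i - ε i * spin p (i + 1)| ≤ 1 - ε i * corr p i) ∧
    ∑ i, (1 - ε i * corr p i) < 2}

lemma mem_cycleRelaxation_iff {p : (Fin (n + 1) → ℝ) × (Fin (n + 1) → ℝ)} :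
    p ∈ cycleRelaxation n ↔ ∀ i, IsCorrelation (spin p i) (spin p (i + 1)) (corr p i) := by
  refine forall_congr' fun i => ⟨fun h ε => ?_, fun h => ?_⟩
  · obtain ⟨hy, hx, hx', hxx'⟩ := h
    rw [spin, spin, corr, abs_le]
    rcases Int.units_eq_one_or ε with rfl | rfl <;> push_cast <;> constructor <;> linarith
  · have h₁ := abs_le.1 (h 1)
    have h₂ := abs_le.1 (h (-1))
    simp only [spin, corr] at h₁ h₂
    push_cast at h₁ h₂
    exact ⟨by linarith, by linarith, by linarith, by linarith⟩

lemma add_one_add_last (i : Fin (n + 1)) : i + 1 + Fin.last n = i := by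
  rw [add_assoc, add_comm 1, Fin.last_add_one, add_zero]

open scoped Fin.NatCast Fin.CommRing in
@[to_additive]
lemma prod_range_rotate_mul {M : Type*} [CommMonoid M] (g : Fin (n + 1) → M) (i : Fin (n + 1)) :
    (∏ j ∈ Finset.range n, g (i + 1 + (j : Fin (n + 1)))) * g i = ∏ j, g j := by
  rw [← Equiv.prod_comp (Equiv.addLeft (i + 1)) g, Fin.prod_univ_castSucc, Finset.prod_range]
  simp [← add_assoc, add_one_add_last]

open scoped Fin.NatCast Fin.CommRing in
lemma abs_add_mul_le_sum_sub {u w : Fin (n + 1) → ℝ} {ε : Fin (n + 1) → ℤˣ} (hε : ∏ i, ε i = -1)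
    (h : ∀ i, |u i - ε i * u (i + 1)| ≤ w i) (i : Fin (n + 1)) :
    |u i + ε i * u (i + 1)| ≤ ∑ j, w j - w i := by
  have hwalk := abs_sub_prod_mul_le_sum (u := fun j => u (i + 1 + (j : Fin (n + 1))))
    (w := fun j => w (i + 1 + (j : Fin (n + 1)))) (ε := fun j => ε (i + 1 + (j : Fin (n + 1))))
    (k := n) fun j _ => by simpa [add_assoc] using h (i + 1 + (j : Fin (n + 1)))
  have hprod : ∏ j ∈ Finset.range n, ε (i + 1 + (j : Fin (n + 1))) = -ε i := by
    rw [← mul_one (∏ j ∈ _, _), ← Int.units_mul_self (ε i), ← mul_assoc, prod_range_rotate_mul, hε,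
      neg_one_mul]
  rw [hprod, eq_sub_of_add_eq (sum_range_rotate_add w i), Nat.cast_zero, add_zero,
    Fin.natCast_eq_last, add_one_add_last] at hwalk
  convert hwalk using 1
  rcases Int.units_eq_one_or (ε i) with hi | hi <;>
    simp [hi, add_comm, ← sub_eq_add_neg, abs_sub_comm]

lemma cycleCorner_subset_cycleRelaxation {ε : Fin (n + 1) → ℤˣ} (hε : ∏ i, ε i = -1) :
    cycleCorner ε ⊆ cycleRelaxation n := by
  rintro p ⟨hp, hsum⟩
  refine mem_cycleRelaxation_iff.2 fun i σ => ?_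
  rcases eq_or_ne σ (ε i) with rfl | hne
  · exact hp i
  · rw [Int.units_ne_iff_eq_neg.1 hne]
    push_cast
    rw [neg_mul, neg_mul, sub_neg_eq_add]
    linarith [abs_add_mul_le_sum_sub hε hp i]

lemma corr_eq_spin_mul_spin {p : (Fin (n + 1) → ℝ) × (Fin (n + 1) → ℝ)} (hp : p ∈ cycleVertices n)
    (i : Fin (n + 1)) : corr p i = spin p i * spin p (i + 1) := by
  rw [corr, spin, spin, hp.2]
  ring

lemma two_le_sum_of_mem_cycleVertices {ε : Fin (n + 1) → ℤˣ} (hε : ∏ i, ε i = -1)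
    {p : (Fin (n + 1) → ℝ) × (Fin (n + 1) → ℝ)} (hp : p ∈ cycleVertices n) :
    2 ≤ ∑ i, (1 - ε i * corr p i) := by
  choose s hs using fun i => exists_eq_units_int_of_eq_one_or_eq_neg_one (s := spin p i) (by
    rcases hp.1 i with h | h <;> norm_num [spin, h])
  have hcorr (i : Fin (n + 1)) : corr p i = (s i * s (i + 1) : ℤˣ) := by
    rw [corr_eq_spin_mul_spin hp, hs, hs]
    push_cast
    rfl
  have hprod : ∏ i, s i * s (i + 1) = 1 := by
    rw [Finset.prod_mul_distrib, ← Equiv.prod_comp (Equiv.addRight 1) s]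
    exact Int.units_mul_self _
  have hzero (i : Fin (n + 1)) : 1 - ((s i * s (i + 1) : ℤˣ) : ℝ) * corr p i = 0 := by
    rcases Int.units_eq_one_or (s i * s (i + 1)) with h | h <;> simp [hcorr, h]
  have := two_le_sum_add_sum_of_prod_eq_neg_prod (s := .univ) (c := corr p) (σ := ε)
    (τ := fun i => s i * s (i + 1))
    (fun i _ => by rcases Int.units_eq_one_or (s i * s (i + 1)) with h | h <;> simp [hcorr, h])
    (by rw [hε, hprod])
  simpa only [hzero, Finset.sum_const_zero, add_zero] using this

lemma two_le_sum_of_mem_convexHull_cycleVertices {ε : Fin (n + 1) → ℤˣ} (hε : ∏ i, ε i = -1)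
    {p : (Fin (n + 1) → ℝ) × (Fin (n + 1) → ℝ)} (hp : p ∈ convexHull ℝ (cycleVertices n)) :
    2 ≤ ∑ i, (1 - ε i * corr p i) := by
  suffices h : ∑ i, (1 - ε i * corr p i) ∈ convexHull ℝ (Set.Ici 2) by
    rwa [(convex_Ici 2).convexHull_eq] at h
  refine map_mem_convexHull (f := fun p => ∑ i, (1 - ε i * corr p i)) (fun p q a b hab => ?_)
    (fun p hp => subset_convexHull ℝ _ (two_le_sum_of_mem_cycleVertices hε hp)) hp
  obtain rfl : b = 1 - a := by linarith
  rw [smul_eq_mul, smul_eq_mul, Finset.mul_sum, Finset.mul_sum, ← Finset.sum_add_distrib]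
  refine Finset.sum_congr rfl fun i _ => ?_
  simp only [corr, Prod.fst_add, Prod.snd_add, Prod.smul_fst, Prod.smul_snd, Pi.add_apply,
    Pi.smul_apply, smul_eq_mul]
  ring

/-- The point with vertex spins `q.1 i`, correlation `q.2.1 i` along the edge `{i, i + 1}` and
`q.2.2` along the edge `{n, 0}`. -/
def ofSpinCorr (n : ℕ) (q : (ℕ → ℝ) × (ℕ → ℝ) × ℝ) : (Fin (n + 1) → ℝ) × (Fin (n + 1) → ℝ) :=
  (fun i => (1 + q.1 i) / 2, fun i => (1 + q.1 i + q.1 (i + 1 : Fin (n + 1)) +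
    (Fin.snoc (fun j : Fin n => q.2.1 j) q.2.2 : Fin (n + 1) → ℝ) i) / 4)

lemma ofSpinCorr_mem_convexHull {q : (ℕ → ℝ) × (ℕ → ℝ) × ℝ}
    (hq : q ∈ convexHull ℝ (pathChordSpins n)) :
    ofSpinCorr n q ∈ convexHull ℝ (cycleVertices n) := by
  refine map_mem_convexHull (fun q r a b hab => ?_) (fun q hq => subset_convexHull ℝ _ ?_) hq
  · obtain rfl : b = 1 - a := by linarith
    ext i
    · simp only [ofSpinCorr, Prod.fst_add, Prod.smul_fst, Pi.add_apply, Pi.smul_apply, smul_eq_mul]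
      ring
    · simp only [ofSpinCorr, Prod.fst_add, Prod.snd_add, Prod.smul_fst, Prod.smul_snd, Pi.add_apply,
        Pi.smul_apply, smul_eq_mul]
      induction i using Fin.lastCases <;> simp only [Fin.snoc_last, Fin.snoc_castSucc] <;> ring
  · refine ⟨fun i => ?_, fun i => ?_⟩
    · rcases hq.1 i i.is_le with h | h <;> simp [ofSpinCorr, h]
    · induction i using Fin.lastCases with
      | last =>
        simp only [ofSpinCorr, Fin.snoc_last, Fin.last_add_one, Fin.val_last, Fin.val_zero, hq.2.2]
        ring
      | cast i =>
        simp only [ofSpinCorr, Fin.snoc_castSucc, Fin.coeSucc_eq_succ, Fin.val_castSucc,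
          Fin.val_succ, hq.2.1 i i.isLt]
        ring

open scoped Fin.NatCast in
lemma mem_convexHull_cycleVertices {p : (Fin (n + 1) → ℝ) × (Fin (n + 1) → ℝ)}
    (hp : p ∈ cycleRelaxation n)
    (hodd : ∀ ε : Fin (n + 1) → ℤˣ, ∏ i, ε i = -1 → 2 ≤ ∑ i, (1 - ε i * corr p i)) :
    p ∈ convexHull ℝ (cycleVertices n) := by
  rw [mem_cycleRelaxation_iff] at hp
  have hpath := mem_convexHull_pathChordSpins (k := n) (u := fun j => spin p j)
    (c := fun j => corr p j) (C := corr p (Fin.last n))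
    (fun i _ => by simpa using hp i) (by simpa using (hp (Fin.last n)).symm) (fun ε => by
      have h := hodd (Fin.snoc (fun i : Fin n => ε i) (-∏ i : Fin n, ε i)) (by
        simp [Fin.prod_univ_castSucc, Int.units_mul_self])
      simp only [Fin.sum_univ_castSucc, Fin.snoc_castSucc, Fin.snoc_last] at h
      simp only [Finset.prod_range, Finset.sum_range, Fin.coe_eq_castSucc]
      push_cast at h ⊢
      linarith)
  convert ofSpinCorr_mem_convexHull hpath using 1
  ext i
  · simp [ofSpinCorr, spin]
  · simp only [ofSpinCorr, Fin.cast_val_eq_self]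
    induction i using Fin.lastCases <;>
      simp only [Fin.snoc_last, Fin.snoc_castSucc, Fin.coe_eq_castSucc, spin, corr] <;> ring

/-- The sign patterns on the edges of the cycle with an odd number of entries `-1`. They index the
odd-cycle inequalities. -/
def oddSigns (n : ℕ) : Finset (Fin (n + 1) → ℤˣ) :=
  Finset.univ.filter fun ε => ∏ i, ε i = -1

lemma mem_oddSigns {ε : Fin (n + 1) → ℤˣ} : ε ∈ oddSigns n ↔ ∏ i, ε i = -1 := by
  simp [oddSigns]

lemma cycleRelaxation_diff_convexHull_cycleVertices :
    cycleRelaxation n \ convexHull ℝ (cycleVertices n) = ⋃ ε ∈ oddSigns n, cycleCorner ε := by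
  ext p
  simp only [Set.mem_iUnion₂, mem_oddSigns, exists_prop]
  constructor
  · rintro ⟨hp, hhull⟩
    contrapose! hhull
    refine mem_convexHull_cycleVertices hp fun ε hε => ?_
    by_contra! hlt
    exact hhull ε hε ⟨fun i => mem_cycleRelaxation_iff.1 hp i (ε i), hlt⟩
  · rintro ⟨ε, hε, hp⟩
    exact ⟨cycleCorner_subset_cycleRelaxation hε hp, fun hhull =>
      hp.2.not_ge (two_le_sum_of_mem_convexHull_cycleVertices hε hhull)⟩

lemma pairwiseDisjoint_cycleCorner :
    (oddSigns n : Set (Fin (n + 1) → ℤˣ)).PairwiseDisjoint cycleCorner := by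
  intro ε hε ε' hε' hne
  rw [Finset.mem_coe, mem_oddSigns] at hε hε'
  refine Set.disjoint_left.2 fun p hp hp' => ?_
  have hcorr (i : Fin (n + 1)) : |corr p i| ≤ 1 :=
    (mem_cycleRelaxation_iff.1 (cycleCorner_subset_cycleRelaxation hε hp) i).abs_corr_le_one
  obtain ⟨i, hi⟩ := Function.ne_iff.1 hne
  rw [Int.units_ne_iff_eq_neg] at hi
  have hprod : ∏ j ∈ Finset.univ.erase i, ε j = -∏ j ∈ Finset.univ.erase i, ε' j := by
    refine mul_right_cancel (b := ε i) ?_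
    rw [Finset.prod_erase_mul _ _ (Finset.mem_univ i), hi, neg_mul_neg,
      Finset.prod_erase_mul _ _ (Finset.mem_univ i), hε, hε']
  have hrest := two_le_sum_add_sum_of_prod_eq_neg_prod (fun j _ => hcorr j) hprod
  have hsum := hp.2
  have hsum' := hp'.2
  rw [← Finset.sum_erase_add _ _ (Finset.mem_univ i)] at hsum hsum'
  rw [hi] at hsum
  push_cast at hsum
  linarith

lemma card_filter_prod_eq {G : Type*} [CommGroup G] [Fintype G] [DecidableEq G] (n : ℕ) (g : G) :
    (Finset.univ.filter fun f : Fin (n + 1) → G => ∏ i, f i = g).card = Fintype.card G ^ n := by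
  calc _ = Fintype.card (Fin n → G) :=
      Finset.card_nbij' Fin.tail (fun f => Fin.cons (g / ∏ i, f i) f) (fun _ _ => Finset.mem_univ _)
        (fun f _ => by simp [Fin.prod_univ_succ])
        (fun f hf => by
          rw [← (Finset.mem_filter.1 hf).2, Fin.prod_univ_succ]
          simpa only [Fin.tail_def, mul_div_cancel_right] using Fin.cons_self_tail f)
        fun f _ => Fin.tail_cons _ _
    _ = Fintype.card G ^ n := by rw [Fintype.card_fun, Fintype.card_fin]

lemma card_oddSigns (n : ℕ) : (oddSigns n).card = 2 ^ n := by
  rw [oddSigns, card_filter_prod_eq, Fintype.card_units_int]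

end CyclePolytope

section CycleVolume

variable {n : ℕ}

lemma mem_cycleCorner_iff {ε : Fin (n + 1) → ℤˣ} {x y l : Fin (n + 1) → ℝ}
    (hl : ∀ i, l i = (1 + ε i) / 2 * x i - ε i * y i) :
    (x, y) ∈ cycleCorner ε ↔
      Sum.elim l (fun i => l i + (1 - ε i) / 2 - (x i - ε i * x (i + 1))) ∈
        solidSimplex (Fin (n + 1) ⊕ Fin (n + 1)) 1 := by
  set r : Fin (n + 1) → ℝ := fun i => l i + (1 - ε i) / 2 - (x i - ε i * x (i + 1)) with hr
  have hdiff (i : Fin (n + 1)) : spin (x, y) i - ε i * spin (x, y) (i + 1) = 2 * (l i - r i) := by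
    simp only [spin, hr]
    ring
  have hweight (i : Fin (n + 1)) : 1 - ε i * corr (x, y) i = 2 * (l i + r i) := by
    simp only [corr, hr, hl]
    rcases Int.units_eq_one_or (ε i) with h | h <;> simp only [h] <;> push_cast <;> ring
  have hsum : ∑ i, 2 * (l i + r i) < 2 ↔ ∑ i, l i + ∑ i, r i < 1 := by
    rw [← Finset.mul_sum, Finset.sum_add_distrib]
    constructor <;> intro h <;> linarith
  have hnonneg (i : Fin (n + 1)) : |2 * (l i - r i)| ≤ 2 * (l i + r i) ↔ 0 ≤ l i ∧ 0 ≤ r i := by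
    rw [abs_le]
    constructor <;> rintro ⟨h₁, h₂⟩ <;> constructor <;> linarith
  simp only [cycleCorner, solidSimplex, Set.mem_ofPred_eq, hdiff, hweight, hsum, hnonneg,
    Sum.forall, Sum.elim_inl, Sum.elim_inr, Fintype.sum_sum_type, forall_and]

lemma measurableSet_cycleCorner (ε : Fin (n + 1) → ℤˣ) : MeasurableSet (cycleCorner ε) := by
  unfold cycleCorner spin corr
  rw [Set.ofPred_and, Set.ofPred_forall]
  exact (MeasurableSet.iInter fun i => measurableSet_le (by fun_prop) (by fun_prop)).inter
    (measurableSet_lt (by fun_prop) measurable_const)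

lemma volume_cycleCorner {ε : Fin (n + 1) → ℤˣ} (hε : ∏ i, ε i = -1) :
    volume (cycleCorner ε) = ENNReal.ofReal (1 / 2 / (2 * (n + 1)).factorial) := by
  let S : Set ((Fin (n + 1) → ℝ) × (Fin (n + 1) → ℝ)) :=
    {q | Sum.elim q.1 q.2 ∈ solidSimplex (Fin (n + 1) ⊕ Fin (n + 1)) 1}
  let M : Matrix (Fin (n + 1)) (Fin (n + 1)) ℝ := cyclicBidiagonal fun i => ((ε i : ℤ) : ℝ)
  let g (l : Fin (n + 1) → ℝ) (i : Fin (n + 1)) : ℝ := l i + (1 - ε i) / 2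
  let shear (p : (Fin (n + 1) → ℝ) × (Fin (n + 1) → ℝ)) :
      (Fin (n + 1) → ℝ) × (Fin (n + 1) → ℝ) :=
    (p.1, fun i => (1 + ε i) / 2 * p.1 i - ε i * p.2 i)
  have hg : Measurable g := by fun_prop
  have hS : MeasurableSet S :=
    (volume_measurePreserving_sumPiEquivProdPi fun _ : Fin (n + 1) ⊕ Fin (n + 1) => ℝ).symm
      |>.measurable (measurableSet_solidSimplex _ 1)
  have hdet : M.det = 2 := by
    rw [det_cyclicBidiagonal, ← Int.cast_prod, ← Units.coe_prod, hε]
    norm_num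
  have hpre : cycleCorner ε = shear ⁻¹' {p | (p.2, g p.2 - M.mulVec p.1) ∈ S} := by
    ext ⟨x, y⟩
    rw [mem_cycleCorner_iff fun _ => rfl]
    simp only [S, g, M, shear, Set.mem_preimage, Set.mem_ofPred_eq]
    congr! 2
    ext i
    rw [Pi.sub_apply, cyclicBidiagonal_mulVec]
  have hshear : MeasurePreserving shear :=
    measurePreserving_shear_units_mul
      (a := fun x : Fin (n + 1) → ℝ => fun i => (1 + ε i) / 2 * x i) (by fun_prop) ε
  rw [hpre, hshear.measure_preimage (s := {p | (p.2, g p.2 - M.mulVec p.1) ∈ S})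
      (measurable_prodMk_sub_mulVec M hg hS).nullMeasurableSet,
    volume_setOf_prodMk_sub_mulVec_mem (by simp [hdet]) hg hS, volume_setOf_sumElim_mem,
    volume_solidSimplex _ one_pos, hdet, ← ENNReal.ofReal_mul (abs_nonneg _), Fintype.card_sum,
    Fintype.card_fin, one_pow, ← two_mul, abs_of_pos (by norm_num)]
  congr 1
  ring

lemma volume_cycleRelaxation_diff_convexHull_cycleVertices (n : ℕ) :
    volume (cycleRelaxation n \ convexHull ℝ (cycleVertices n)) =
      ENNReal.ofReal (2 ^ n * (1 / 2 / (2 * (n + 1)).factorial)) := by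
  rw [cycleRelaxation_diff_convexHull_cycleVertices,
    measure_biUnion_finset pairwiseDisjoint_cycleCorner fun ε _ => measurableSet_cycleCorner ε,
    Finset.sum_congr rfl fun ε hε => volume_cycleCorner (mem_oddSigns.1 hε), Finset.sum_const,
    card_oddSigns, nsmul_eq_mul, ENNReal.ofReal_mul (by positivity)]
  norm_num

lemma volume_Icc_max_min (s t : ℝ) :
    volume (Set.Icc (max 0 (s + t - 1)) (min s t)) = min (tent s) (tent t) := by
  rw [Real.volume_Icc, tent, tent, ← ENNReal.ofReal_min]
  congr 1
  grind

lemma measurableSet_cycleRelaxation (n : ℕ) : MeasurableSet (cycleRelaxation n) := by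
  simp only [cycleRelaxation, Set.ofPred_forall, Set.ofPred_and]
  refine MeasurableSet.iInter fun i => ?_
  refine .inter ?_ (.inter ?_ (.inter ?_ ?_)) <;> exact measurableSet_le (by fun_prop) (by fun_prop)

lemma volume_cycleRelaxation (n : ℕ) : volume (cycleRelaxation n) =
    ∫⁻ x : Fin (n + 1) → ℝ, ∏ i, min (tent (x i)) (tent (x (i + 1))) := by
  have hslice (x : Fin (n + 1) → ℝ) : Prod.mk x ⁻¹' cycleRelaxation n =
      Set.univ.pi fun i => Set.Icc (max 0 (x i + x (i + 1) - 1)) (min (x i) (x (i + 1))) := by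
    ext y
    simp only [cycleRelaxation, Set.mem_preimage, Set.mem_ofPred_eq, Set.mem_univ_pi, Set.mem_Icc,
      max_le_iff, le_min_iff, sub_le_iff_le_add']
    exact forall_congr' fun i => by tauto
  rw [Measure.volume_eq_prod, Measure.prod_apply (measurableSet_cycleRelaxation n)]
  simp only [hslice, volume_pi_pi, volume_Icc_max_min]

end CycleVolume

section CycleGraph

variable {n : ℕ}

lemma cycleG_adj_iff (hn : 1 ≤ n) {i j : Fin (n + 1)} :
    (cycleG (n + 1)).Adj i j ↔ j = i + 1 ∨ i = j + 1 := by
  have hsucc (i j : Fin (n + 1)) : ((i : ℕ) + 1) % (n + 1) = j ↔ j = i + 1 := by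
    simp [Fin.ext_iff, Fin.val_add, eq_comm]
  rw [cycleG, SimpleGraph.fromRel_adj, hsucc, hsucc, and_iff_right_iff_imp]
  rintro h rfl
  have : n = 0 := by simpa using h
  omega

/-- The edge `{i, i + 1}` of the cycle. For `n = 1` both values of `i` would give the same edge. -/
def cycleEdgeEquiv (hn : 2 ≤ n) : Fin (n + 1) ≃ (cycleG (n + 1)).edgeSet :=
  .ofBijective
    (fun i => ⟨s(i, i + 1), (cycleG_adj_iff (Nat.one_le_of_lt hn)).2 (.inl rfl)⟩) <| by
    refine ⟨fun i j hij => ?_, ?_⟩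
    · have htwo : (1 + 1 : Fin (n + 1)) ≠ 0 := by
        rw [Ne, Fin.ext_iff, Fin.val_add, Fin.val_one', Fin.val_zero,
          Nat.mod_eq_of_lt (by omega : 1 < n + 1), Nat.mod_eq_of_lt (by omega)]
        omega
      rcases Sym2.eq_iff.1 (congrArg Subtype.val hij) with h | ⟨rfl, h⟩
      · exact h.1
      · simp [add_assoc, htwo] at h
    · rintro ⟨e, he⟩
      induction e using Sym2.ind with
      | _ i j =>
        have hij : (cycleG (n + 1)).Adj i j := he
        rcases (cycleG_adj_iff (Nat.one_le_of_lt hn)).1 hij with rfl | rfl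
        · exact ⟨i, rfl⟩
        · exact ⟨j, Subtype.ext Sym2.eq_swap⟩

lemma forall_cycleG_adj_iff (hn : 2 ≤ n)
    {P : Fin (n + 1) → Fin (n + 1) → (cycleG (n + 1)).edgeSet → Prop}
    (hP : ∀ i j e, P i j e → P j i e) :
    (∀ (i j : Fin (n + 1)) (h : (cycleG (n + 1)).Adj i j),
      P i j ⟨s(i, j), (SimpleGraph.mem_edgeSet _).mpr h⟩) ↔
      ∀ i, P i (i + 1) (cycleEdgeEquiv hn i) := by
  refine ⟨fun h i => h i (i + 1) ((cycleG_adj_iff (Nat.one_le_of_lt hn)).2 (.inl rfl)),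
    fun h i j hij => ?_⟩
  rcases (cycleG_adj_iff (Nat.one_le_of_lt hn)).1 hij with rfl | rfl
  · exact h i
  · convert hP _ _ _ (h j) using 1
    exact Subtype.ext Sym2.eq_swap

/-- Reindexing of the edge coordinates of `Q(C_m)` along `cycleEdgeEquiv`. -/
def cycleCoord (hn : 2 ≤ n) : ((Fin (n + 1) → ℝ) × ((cycleG (n + 1)).edgeSet → ℝ)) ≃ₗ[ℝ]
    ((Fin (n + 1) → ℝ) × (Fin (n + 1) → ℝ)) :=
  (LinearEquiv.refl ℝ _).prodCongr (LinearEquiv.funCongrLeft ℝ ℝ (cycleEdgeEquiv hn))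

lemma volume_preimage_cycleCoord (hn : 2 ≤ n) (s : Set ((Fin (n + 1) → ℝ) × (Fin (n + 1) → ℝ))) :
    volume (cycleCoord hn ⁻¹' s) = volume s :=
  ((MeasurePreserving.id volume).prod (volume_preserving_arrowCongr' (cycleEdgeEquiv hn).symm
    (.refl ℝ) (.id _))).measure_preimage_equiv (f := (MeasurableEquiv.refl _).prodCongr
      (MeasurableEquiv.arrowCongr' (cycleEdgeEquiv hn).symm (.refl ℝ))) s

lemma QSet_cycleG (hn : 2 ≤ n) : QSet (cycleG (n + 1)) = cycleCoord hn ⁻¹' cycleRelaxation n := by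
  ext p
  have hadj := forall_cycleG_adj_iff hn (P := fun i j e => 0 ≤ p.2 e ∧ p.2 e ≤ p.1 i ∧
    p.2 e ≤ p.1 j ∧ p.1 i + p.1 j ≤ 1 + p.2 e) fun i j e ⟨hy, hi, hj, hij⟩ =>
      ⟨hy, hj, hi, add_comm (p.1 i) _ ▸ hij⟩
  refine ⟨fun h => hadj.1 h.2.2, fun h => ?_⟩
  have hx (i : Fin (n + 1)) : p.1 i ∈ Set.Icc (0 : ℝ) 1 := by
    obtain ⟨hy, hi, hj, hij⟩ := hadj.1 (hadj.2 h) i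
    exact ⟨by linarith, by linarith⟩
  refine ⟨hx, fun e => ?_, hadj.2 h⟩
  obtain ⟨i, rfl⟩ := (cycleEdgeEquiv hn).surjective e
  exact ⟨(h i).1, (h i).2.1.trans (hx i).2⟩

lemma BQPSet_cycleG (hn : 2 ≤ n) :
    BQPSet (cycleG (n + 1)) = cycleCoord hn ⁻¹' convexHull ℝ (cycleVertices n) := by
  have hvertices : {p : (Fin (n + 1) → ℝ) × ((cycleG (n + 1)).edgeSet → ℝ) |
      (∀ i, p.1 i = 0 ∨ p.1 i = 1) ∧ ∀ (i j : Fin (n + 1)) (h : (cycleG (n + 1)).Adj i j),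
        p.2 ⟨s(i, j), (SimpleGraph.mem_edgeSet _).mpr h⟩ = p.1 i * p.1 j} =
      cycleCoord hn ⁻¹' cycleVertices n := by
    ext p
    exact and_congr_right' (forall_cycleG_adj_iff hn (P := fun i j e => p.2 e = p.1 i * p.1 j)
      fun i j e h => h.trans (mul_comm _ _))
  rw [BQPSet, hvertices, ← LinearEquiv.image_symm_eq_preimage, ← LinearEquiv.image_symm_eq_preimage]
  exact ((cycleCoord hn).symm.toLinearMap.image_convexHull _).symm

end CycleGraph

section CycleGraphVolume

variable {m : ℕ}

lemma le_volume_QSet_cycleG (hm : 3 ≤ m) :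
    1 / 4 * (√2 / Real.pi) ^ (2 * m) ≤ (volume (QSet (cycleG m))).toReal := by
  obtain ⟨n, rfl⟩ := Nat.exists_eq_add_of_le' (Nat.one_le_of_lt hm)
  rw [QSet_cycleG (by omega), volume_preimage_cycleCoord, volume_cycleRelaxation, pow_mul, div_pow,
    Real.sq_sqrt zero_le_two]
  exact (ENNReal.ofReal_le_iff_le_toReal (ne_top_of_le_ne_top ENNReal.ofReal_ne_top
    (lintegral_cycle_min_tent_le n))).1 (le_lintegral_cycle_min_tent n)

lemma volume_QSet_cycleG_le (hm : 3 ≤ m) :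
    (volume (QSet (cycleG m))).toReal ≤ Real.pi * (√2 / Real.pi) ^ (2 * m) := by
  obtain ⟨n, rfl⟩ := Nat.exists_eq_add_of_le' (Nat.one_le_of_lt hm)
  rw [QSet_cycleG (by omega), volume_preimage_cycleCoord, volume_cycleRelaxation, pow_mul, div_pow,
    Real.sq_sqrt zero_le_two]
  exact ENNReal.toReal_le_of_le_ofReal (by positivity) (lintegral_cycle_min_tent_le n)

lemma volume_QSet_diff_BQPSet_cycleG (hm : 3 ≤ m) :
    (volume (QSet (cycleG m) \ BQPSet (cycleG m))).toReal =
      1 / 4 * √2 ^ (2 * m) / (2 * m).factorial := by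
  obtain ⟨n, rfl⟩ := Nat.exists_eq_add_of_le' (Nat.one_le_of_lt hm)
  rw [QSet_cycleG (by omega), BQPSet_cycleG (by omega), ← Set.preimage_sdiff,
    volume_preimage_cycleCoord, volume_cycleRelaxation_diff_convexHull_cycleVertices,
    ENNReal.toReal_ofReal (by positivity), pow_mul, Real.sq_sqrt zero_le_two, pow_succ]
  ring

end CycleGraphVolume

section RootAsymptotics

lemma tendsto_const_mul_pow_root {a c : ℝ} (ha : 0 ≤ a) (hc : 0 < c) :
    Tendsto (fun k : ℕ => (c * a ^ k) ^ (1 / (k : ℝ))) atTop (nhds a) := by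
  have hroot : Tendsto (fun k : ℕ => c ^ (1 / (k : ℝ)) * a) atTop (nhds (c ^ (0 : ℝ) * a)) :=
    (tendsto_const_nhds.rpow tendsto_one_div_atTop_nhds_zero_nat (.inl hc.ne')).mul_const a
  rw [Real.rpow_zero, one_mul] at hroot
  refine hroot.congr' ?_
  filter_upwards [eventually_ne_atTop 0] with k hk
  rw [Real.mul_rpow hc.le (by positivity), one_div, Real.pow_rpow_inv_natCast ha hk]

lemma tendsto_factorial_root_div :
    Tendsto (fun k : ℕ => (k.factorial : ℝ) ^ (1 / (k : ℝ)) / k) atTop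
      (nhds (Real.exp 1)⁻¹) := by
  have hstirling : Tendsto (fun k : ℕ => Stirling.stirlingSeq k ^ (1 / (k : ℝ))) atTop
      (nhds (√Real.pi ^ (0 : ℝ))) :=
    Stirling.tendsto_stirlingSeq_sqrt_pi.rpow tendsto_one_div_atTop_nhds_zero_nat
      (.inl (by positivity))
  have hsqrt : Tendsto (fun k : ℕ => (2 * (k : ℝ)) ^ (1 / (2 * (k : ℝ)))) atTop (nhds 1) :=
    tendsto_rpow_div.comp (tendsto_natCast_atTop_atTop.const_mul_atTop two_pos)
  have hlim := (hstirling.mul hsqrt).mul_const (Real.exp 1)⁻¹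
  rw [Real.rpow_zero, one_mul, one_mul] at hlim
  refine hlim.congr' ?_
  filter_upwards [eventually_ne_atTop 0] with k hk
  have hk' : (k : ℝ) ≠ 0 := Nat.cast_ne_zero.2 hk
  have hfactorial : (k.factorial : ℝ) =
      Stirling.stirlingSeq k * (√(2 * k) * (k / Real.exp 1) ^ k) := by
    rw [Stirling.stirlingSeq, div_mul_cancel₀ _ (by positivity)]
  have hseq : 0 ≤ Stirling.stirlingSeq k := by rw [Stirling.stirlingSeq]; positivity
  have hsqrt_root : √(2 * k : ℝ) ^ (1 / (k : ℝ)) = (2 * (k : ℝ)) ^ (1 / (2 * (k : ℝ))) := by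
    rw [Real.sqrt_eq_rpow, ← Real.rpow_mul (by positivity), one_div_mul_one_div]
  have hpow_root : (((k : ℝ) / Real.exp 1) ^ k) ^ (1 / (k : ℝ)) = k / Real.exp 1 := by
    rw [one_div, Real.pow_rpow_inv_natCast (by positivity) hk]
  rw [hfactorial, Real.mul_rpow hseq (by positivity),
    Real.mul_rpow (x := √(2 * k)) (by positivity) (by positivity), hsqrt_root, hpow_root]
  field_simp

lemma tendsto_mul_root_div_factorial {a c : ℝ} (ha : 0 ≤ a) (hc : 0 < c) :
    Tendsto (fun k : ℕ => k * (c * a ^ k / k.factorial) ^ (1 / (k : ℝ))) atTop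
      (nhds (a * Real.exp 1)) := by
  have hlim := (tendsto_const_mul_pow_root ha hc).div tendsto_factorial_root_div (by positivity)
  rw [div_inv_eq_mul] at hlim
  refine hlim.congr fun k => ?_
  simp only [Pi.div_apply]
  rw [Real.div_rpow (by positivity) (by positivity), div_div_eq_mul_div]
  ring

end RootAsymptotics

/-- (a) `vol Q(C_m)^(1/2m) → √2/π`; (b) `m * vol(Q(C_m) \ P(C_m))^(1/2m) → e/√2`. -/
theorem tendsto_root_volume_QSet_cycle :
    Tendsto (fun m : ℕ =>
      (volume (QSet (cycleG m))).toReal ^ (1 / (2 * (m : ℝ))))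
      atTop (nhds (Real.sqrt 2 / Real.pi)) ∧
    Tendsto (fun m : ℕ =>
      (m : ℝ) * (volume (QSet (cycleG m) \ BQPSet (cycleG m))).toReal ^
        (1 / (2 * (m : ℝ))))
      atTop (nhds (Real.exp 1 / Real.sqrt 2)) := by
  have htwo_mul : Tendsto (fun m : ℕ => 2 * m) atTop atTop := tendsto_id.const_mul_atTop' two_pos
  have hroot {c : ℝ} (hc : 0 < c) := (tendsto_const_mul_pow_root (a := √2 / Real.pi)
    (by positivity) hc).comp htwo_mul
  refine ⟨tendsto_of_tendsto_of_tendsto_of_le_of_le' (hroot (c := 1 / 4) (by norm_num))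
    (hroot Real.pi_pos) ?_ ?_, ?_⟩
  · filter_upwards [eventually_ge_atTop 3] with m hm
    simpa using Real.rpow_le_rpow (by positivity) (le_volume_QSet_cycleG hm) (by positivity)
  · filter_upwards [eventually_ge_atTop 3] with m hm
    simpa using Real.rpow_le_rpow (by positivity) (volume_QSet_cycleG_le hm) (by positivity)
  · have hlim := ((tendsto_mul_root_div_factorial (a := √2) (c := 1 / 4) (by positivity)
      (by norm_num)).comp htwo_mul).const_mul (1 / 2)
    have hvalue : 1 / 2 * (√2 * Real.exp 1) = Real.exp 1 / √2 := by
      rw [eq_div_iff (by positivity)]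
      linear_combination Real.exp 1 / 2 * Real.mul_self_sqrt zero_le_two
    rw [hvalue] at hlim
    refine hlim.congr' ?_
    filter_upwards [eventually_ge_atTop 3] with m hm
    rw [volume_QSet_diff_BQPSet_cycleG hm, Function.comp_apply, Nat.cast_mul, Nat.cast_two]
    ring
end
end
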